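/- arXiv:1909.03870 — 2 statements merged into one kernel-verified Lean document; each statement's English description precedes it below -/
import Mathlib

section
/- Let T = 2 and d ∈ {2, 3}, let c(Y) = Σ_{1≤i<j≤d} c_{ij} Y_i Y_j with c_{ij} ≥ 0 inducing a connected graph on {1,…,d}, and suppose the marginals (μ_i, ν_i)_{1≤i≤d} have finite second moments and satisfy LIM. If in addition each first marginal μ_i is continuous (i.e. μ_i({x}) = 0 for every x ∈ ℝ), then the first d-dimensional marginal π¹ = π∘X^{-1} is the same for every maximizer π of the MMOT problem sup_{π ∈ ℳ(μ,ν)} ∫ c dπ. -/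
open MeasureTheory Filter

namespace MMOT

/-- `ℝ^d`. -/
abbrev Vec (d : ℕ) := Fin d → ℝ

/-- The set `ℳ(μ,ν)` of martingale couplings: laws of `(X,Y)` with `X_i ∼ μ_i`, `Y_i ∼ ν_i`
and `E[Y|X] = X`. -/
def PairMartSet {d : ℕ} (μ ν : Fin d → Measure ℝ) : Set (Measure (Vec d × Vec d)) :=
  {π | IsProbabilityMeasure π ∧
    (∀ i, π.map (fun p => p.1 i) = μ i) ∧
    (∀ i, π.map (fun p => p.2 i) = ν i) ∧
    (∀ i, (π[fun p => p.2 i | MeasurableSpace.comap Prod.fst inferInstance])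
      =ᵐ[π] fun p => p.1 i)}

/-- Linear Increment of Marginals: `ν_i = μ_i * (a_i)_#κ` for a centered non-Dirac
probability measure `κ`, i.e. `law(Y_i) = law(X_i + a_i Z)` with `Z ∼ κ` independent,
`E[Z] = 0` and `P[Z ≠ 0] > 0`. -/
def LIM {d : ℕ} (μ ν : Fin d → Measure ℝ) (a : Fin d → ℝ) (κ : Measure ℝ) : Prop :=
  IsProbabilityMeasure κ ∧ Integrable (fun z : ℝ => z) κ ∧ (∫ z, z ∂κ) = 0 ∧
    κ {(0 : ℝ)}ᶜ ≠ 0 ∧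
    ∀ i, ν i = ((μ i).prod (κ.map fun z => a i * z)).map fun p => p.1 + p.2

/-- The covariance cost `Σ_{i<j} c_{ij} y_i y_j`. -/
noncomputable def covCost {d : ℕ} (c : Fin d → Fin d → ℝ) (y : Vec d) : ℝ :=
  ∑ i, ∑ j, if i < j then c i j * y i * y j else 0

/-- Adjacency relation of the graph induced by the coefficients `c_{ij}`, `i < j`. -/
def AdjRel {d : ℕ} (c : Fin d → Fin d → ℝ) (i j : Fin d) : Prop :=
  (i < j ∧ 0 < c i j) ∨ (j < i ∧ 0 < c j i)

/-- `π` is a maximizer of the MMOT problem `sup_{π ∈ ℳ(μ,ν)} ∫ c(y) π(dx,dy)`. -/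
def IsMaximizer {d : ℕ} (μ ν : Fin d → Measure ℝ) (c : Fin d → Fin d → ℝ)
    (π : Measure (Vec d × Vec d)) : Prop :=
  π ∈ PairMartSet μ ν ∧
    ∀ π' ∈ PairMartSet μ ν, ∫ p, covCost c p.2 ∂π' ≤ ∫ p, covCost c p.2 ∂π


end MMOT

open ProbabilityTheory Set Topology

namespace MMOT

lemma cont_cdf (μ : Measure ℝ) [IsProbabilityMeasure μ] (h : ∀ x, μ {x} = 0) :
    Continuous (cdf μ) := by
  rw [continuous_iff_continuousAt]
  intro x
  rw [(monotone_cdf μ).continuousAt_iff_leftLim_eq_rightLim, StieltjesFunction.rightLim_eq]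
  have h1 := (cdf μ).measure_singleton x
  rw [measure_cdf, h x] at h1
  have := ENNReal.ofReal_eq_zero.1 h1.symm
  have h2 := (monotone_cdf μ).leftLim_le (le_refl x)
  linarith

lemma exists_cdf_eq (μ : Measure ℝ) [IsProbabilityMeasure μ] (h : ∀ x, μ {x} = 0)
    {u : ℝ} (h0 : 0 < u) (h1 : u < 1) : ∃ s, cdf μ s = u := by
  obtain ⟨b, hb⟩ := ((tendsto_cdf_atTop μ).eventually (lt_mem_nhds h1)).exists
  obtain ⟨a, ha⟩ := ((tendsto_cdf_atBot μ).eventually (gt_mem_nhds h0)).exists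
  exact mem_range_of_exists_le_of_exists_ge (cont_cdf μ h) ⟨a, ha.le⟩ ⟨b, hb.le⟩

/-- probability integral transform -/
lemma measure_cdf_le (μ : Measure ℝ) [IsProbabilityMeasure μ] (h : ∀ x, μ {x} = 0)
    {u : ℝ} (h0 : 0 < u) (h1 : u < 1) : μ {x | cdf μ x ≤ u} = ENNReal.ofReal u := by
  obtain ⟨s, hs⟩ := exists_cdf_eq μ h h0 h1
  obtain ⟨b, hb⟩ := ((tendsto_cdf_atTop μ).eventually (lt_mem_nhds h1)).exists
  set S := {x | cdf μ x ≤ u} with hS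
  have hcl : IsClosed S := isClosed_le (cont_cdf μ h) continuous_const
  have hne : S.Nonempty := ⟨s, hs.le⟩
  have hbd : BddAbove S := ⟨b, fun x hx => by
    by_contra hlt
    have := monotone_cdf μ (not_le.1 hlt).le
    have hx' : cdf μ x ≤ u := hx
    linarith⟩
  have hm := hcl.csSup_mem hne hbd
  have hEq : S = Iic (sSup S) := by
    ext x
    refine ⟨fun hx => le_csSup hbd hx, fun hx => ?_⟩
    exact (monotone_cdf μ hx).trans hm
  rw [hEq, ← ofReal_cdf]
  congr 1
  refine le_antisymm hm ?_
  rw [← hs]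
  exact monotone_cdf μ (le_csSup hbd hs.le)

lemma measure_cdf_le' (μ : Measure ℝ) [IsProbabilityMeasure μ] (h : ∀ x, μ {x} = 0)
    {u : ℝ} (h0 : 0 ≤ u) (h1 : u ≤ 1) : μ {x | cdf μ x ≤ u} = ENNReal.ofReal u := by
  rcases h1.eq_or_lt with rfl | h1
  · have : {x | cdf μ x ≤ 1} = univ := by ext x; simp [cdf_le_one]
    simp [this]
  rcases h0.eq_or_lt with rfl | h0
  · simp only [ENNReal.ofReal_zero]
    refine le_antisymm ?_ (zero_le)
    refine ge_of_tendsto (f := fun e : ℝ => ENNReal.ofReal e) (x := 𝓝[>] 0) ?_ ?_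
    · have : Tendsto (fun e : ℝ => ENNReal.ofReal e) (𝓝 0) (𝓝 (ENNReal.ofReal 0)) :=
        ENNReal.continuous_ofReal.tendsto 0
      rw [ENNReal.ofReal_zero] at this
      exact this.mono_left nhdsWithin_le_nhds
    · filter_upwards [Ioo_mem_nhdsGT (zero_lt_one' ℝ)] with e he
      rw [← measure_cdf_le μ h he.1 he.2]
      exact measure_mono fun x hx => le_trans hx he.1.le
  exact measure_cdf_le μ h h0 h1

lemma ae_cdf_mem (μ : Measure ℝ) [IsProbabilityMeasure μ] (h : ∀ x, μ {x} = 0) :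
    ∀ᵐ x ∂μ, 0 < cdf μ x ∧ cdf μ x < 1 := by
  have hm : ∀ u : ℝ, MeasurableSet {x | cdf μ x ≤ u} := fun u =>
    measurableSet_le (cont_cdf μ h).measurable measurable_const
  have h1 : ∀ᵐ x ∂μ, 0 < cdf μ x := by
    rw [ae_iff]; simpa using measure_cdf_le' μ h le_rfl zero_le_one
  have h2 : ∀ᵐ x ∂μ, cdf μ x < 1 := by
    rw [ae_iff]
    refine le_antisymm ?_ zero_le
    refine ge_of_tendsto (f := fun e : ℝ => ENNReal.ofReal e) (x := 𝓝[>] 0) ?_ ?_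
    · have : Tendsto (fun e : ℝ => ENNReal.ofReal e) (𝓝 0) (𝓝 (ENNReal.ofReal 0)) :=
        ENNReal.continuous_ofReal.tendsto 0
      rw [ENNReal.ofReal_zero] at this
      exact this.mono_left nhdsWithin_le_nhds
    · filter_upwards [Ioo_mem_nhdsGT (zero_lt_one' ℝ)] with e he
      have h3 := measure_cdf_le μ h (u := 1 - e) (by linarith [he.2]) (by linarith [he.1])
      have h4 : μ {x | cdf μ x ≤ 1 - e}ᶜ = ENNReal.ofReal e := by
        rw [prob_compl_eq_one_sub (hm _), h3, ← ENNReal.ofReal_one, ← ENNReal.ofReal_sub _ (by linarith [he.2])]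
        congr 1; ring
      rw [← h4]
      refine measure_mono fun x hx => ?_
      simp only [mem_ofPred_eq, mem_compl_iff, not_lt, not_le] at hx ⊢
      linarith [he.1]
  filter_upwards [h1, h2] with x a b using ⟨a, b⟩

/-- quantile function -/
noncomputable def qf (ν : Measure ℝ) (u : ℝ) : ℝ :=
  open Classical in if 0 < u ∧ u < 1 then sInf {x | u ≤ cdf ν x} else 0

lemma qf_le_iff (ν : Measure ℝ) {u : ℝ} (h0 : 0 < u) (h1 : u < 1) (x : ℝ) :
    qf ν u ≤ x ↔ u ≤ cdf ν x := by
  rw [qf, if_pos ⟨h0, h1⟩]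
  set S := {x | u ≤ cdf ν x} with hS
  obtain ⟨b, hb⟩ := ((tendsto_cdf_atTop ν).eventually (lt_mem_nhds h1)).exists
  obtain ⟨a, ha⟩ := ((tendsto_cdf_atBot ν).eventually (gt_mem_nhds h0)).exists
  have hne : S.Nonempty := ⟨b, hb.le⟩
  have hbd : BddBelow S := ⟨a, fun y hy => by
    by_contra hlt
    have := monotone_cdf ν (not_le.1 hlt).le
    have hx' : u ≤ cdf ν y := hy
    linarith⟩
  constructor
  · intro hx
    have h2 : ∀ y, sInf S < y → u ≤ cdf ν y := fun y hy => by
      obtain ⟨z, hz, hzy⟩ := exists_lt_of_csInf_lt hne hy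
      exact le_trans hz (monotone_cdf ν hzy.le)
    refine le_trans ?_ (monotone_cdf ν hx)
    have hr := ((cdf ν).right_continuous (sInf S)).tendsto
    have hr' := hr.mono_left (nhdsWithin_mono _ Ioi_subset_Ici_self)
    exact ge_of_tendsto hr' (by filter_upwards [self_mem_nhdsWithin] with y hy using h2 y hy)
  · intro hx
    exact csInf_le hbd hx

lemma measurable_qf (ν : Measure ℝ) : Measurable (qf ν) := by
  refine measurable_of_Iic fun x => ?_
  have : qf ν ⁻¹' Iic x = (Ioo 0 1 ∩ Iic (cdf ν x)) ∪ ((Ioo 0 1)ᶜ ∩ {_u | (0:ℝ) ≤ x}) := by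
    ext u
    by_cases hu : 0 < u ∧ u < 1
    · simp [qf_le_iff ν hu.1 hu.2, hu.1, hu.2]
    · have : u ∉ Ioo (0:ℝ) 1 := hu
      simp [qf, if_neg hu, this]
      
  rw [this]
  exact (measurableSet_Ioo.inter measurableSet_Iic).union
    (measurableSet_Ioo.compl.inter (MeasurableSet.const _))

/-- monotone transport -/
noncomputable def tr (μ ν : Measure ℝ) (x : ℝ) : ℝ := qf ν (cdf μ x)

lemma measurable_tr (μ ν : Measure ℝ) : Measurable (tr μ ν) :=
  (measurable_qf ν).comp (monotone_cdf μ).measurable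

lemma tr_le_ae (μ ν : Measure ℝ) [IsProbabilityMeasure μ] (h : ∀ x, μ {x} = 0) :
    ∀ᵐ x ∂μ, ∀ t, tr μ ν x ≤ t ↔ cdf μ x ≤ cdf ν t := by
  filter_upwards [ae_cdf_mem μ h] with x hx t
  exact qf_le_iff ν hx.1 hx.2 t

lemma map_tr (μ ν : Measure ℝ) [IsProbabilityMeasure μ] [IsProbabilityMeasure ν]
    (h : ∀ x, μ {x} = 0) : μ.map (tr μ ν) = ν := by
  have := Measure.isProbabilityMeasure_map (μ := μ) (measurable_tr μ ν).aemeasurable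
  refine Measure.ext_of_Iic _ _ fun t => ?_
  rw [Measure.map_apply (measurable_tr μ ν) measurableSet_Iic, ← ofReal_cdf ν,
    ← measure_cdf_le' μ h (cdf_nonneg ν t) (cdf_le_one ν t)]
  refine measure_congr ?_
  filter_upwards [tr_le_ae μ ν h] with x hx
  exact propext (hx t)

lemma tr_self (μ : Measure ℝ) [IsProbabilityMeasure μ] (h : ∀ x, μ {x} = 0)
    (hi : Integrable (fun x => x) μ) : ∀ᵐ x ∂μ, tr μ μ x = x := by
  have h1 : ∀ᵐ x ∂μ, 0 ≤ x - tr μ μ x := by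
    filter_upwards [tr_le_ae μ μ h] with x hx
    have := (hx x).2 le_rfl
    linarith
  have hm := map_tr μ μ h
  have hi2 : Integrable (tr μ μ) μ := by
    have : Integrable (fun x : ℝ => x) (μ.map (tr μ μ)) := by rw [hm]; exact hi
    exact this.comp_measurable (measurable_tr μ μ)
  have h2 : ∫ x, (x - tr μ μ x) ∂μ = 0 := by
    rw [integral_sub hi hi2]
    have : ∫ x, x ∂(μ.map (tr μ μ)) = ∫ x, tr μ μ x ∂μ :=
      integral_map (measurable_tr μ μ).aemeasurable aestronglyMeasurable_id
    rw [← this, hm, sub_self]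
  have h3 := (integral_eq_zero_iff_of_nonneg_ae h1 (hi.sub hi2)).1 h2
  filter_upwards [h3] with x hx
  have : x - tr μ μ x = 0 := hx
  linarith

end MMOT

namespace MMOT

noncomputable def ee (s x : ℝ) : ℝ := (Ioi s).indicator 1 x - (Iio 0).indicator 1 s

lemma ee_eq (x : ℝ) : (fun s => ee s x) =
    fun s => (Ico 0 x).indicator 1 s - (Ico x 0).indicator 1 s := by
  funext s
  simp only [ee, indicator, mem_Ioi, mem_Iio, mem_Ico, Pi.one_apply]
  split_ifs <;> grind

lemma abs_ee_eq (x : ℝ) : (fun s => ‖ee s x‖) =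
    fun s => (Ico 0 x).indicator 1 s + (Ico x 0).indicator 1 s := by
  funext s
  simp only [ee, indicator, mem_Ioi, mem_Iio, mem_Ico, Pi.one_apply, Real.norm_eq_abs]
  split_ifs <;> grind

lemma int_ind (a b : ℝ) : Integrable ((Ico a b).indicator (1 : ℝ → ℝ)) volume := by
  rw [integrable_indicator_iff measurableSet_Ico]
  exact integrableOn_const (by simp) (by simp)

lemma ee_int (x : ℝ) : Integrable (fun s => ee s x) volume := by
  rw [ee_eq]; exact (int_ind _ _).sub (int_ind _ _)

lemma integral_ee (x : ℝ) : ∫ s, ee s x = x := by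
  rw [ee_eq, integral_sub (int_ind _ _) (int_ind _ _), integral_indicator_one measurableSet_Ico,
    integral_indicator_one measurableSet_Ico]
  simp only [Real.volume_real_Ico]
  rcases le_total x 0 with h | h <;> simp [h]

lemma integral_abs_ee (x : ℝ) : ∫ s, ‖ee s x‖ = |x| := by
  rw [abs_ee_eq, integral_add (int_ind _ _) (int_ind _ _), integral_indicator_one measurableSet_Ico,
    integral_indicator_one measurableSet_Ico]
  simp only [Real.volume_real_Ico]
  rcases le_total x 0 with h | h <;> simp [h, abs_of_nonneg, abs_of_nonpos]

lemma measurable_ee : Measurable (fun p : ℝ × ℝ => ee p.1 p.2) := by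
  have : (fun p : ℝ × ℝ => ee p.1 p.2) = fun p =>
      ({p : ℝ × ℝ | p.1 < p.2}.indicator 1 p : ℝ) - (Iio 0).indicator 1 p.1 := by
    funext p
    simp [ee, indicator]
  rw [this]
  refine Measurable.sub ?_ ?_
  · exact measurable_one.indicator (measurableSet_lt measurable_fst measurable_snd)
  · exact (measurable_one.indicator measurableSet_Iio).comp measurable_fst

section
variable {Ω : Type*} [MeasurableSpace Ω] (P : Measure Ω) [IsProbabilityMeasure P] (X Y : Ω → ℝ)

lemma hoeff_int (hX : Measurable X) (hY : Measurable Y) (hXY : Integrable (fun w => X w * Y w) P) :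
    Integrable (fun q : (ℝ × ℝ) × Ω => ee q.1.1 (X q.2) * ee q.1.2 (Y q.2))
      ((volume.prod volume : Measure (ℝ × ℝ)).prod P) := by
  have hm : Measurable (fun q : (ℝ × ℝ) × Ω => ee q.1.1 (X q.2) * ee q.1.2 (Y q.2)) := by
    refine Measurable.mul ?_ ?_
    · exact measurable_ee.comp ((measurable_fst.comp measurable_fst).prodMk (hX.comp measurable_snd))
    · exact measurable_ee.comp ((measurable_snd.comp measurable_fst).prodMk (hY.comp measurable_snd))
  rw [integrable_prod_iff' hm.aestronglyMeasurable]
  refine ⟨ae_of_all _ fun w => (ee_int (X w)).mul_prod (ee_int (Y w)), ?_⟩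
  simp only [norm_mul]
  have : (fun w => ∫ p : ℝ × ℝ, ‖ee p.1 (X w)‖ * ‖ee p.2 (Y w)‖ ∂(volume.prod volume)) =
      fun w => ‖X w * Y w‖ := by
    funext w
    rw [integral_prod_mul (fun s => ‖ee s (X w)‖) (fun t => ‖ee t (Y w)‖), integral_abs_ee,
      integral_abs_ee, norm_mul]; rfl
  rw [this]
  exact hXY.norm

noncomputable def KK (p : ℝ × ℝ) : ℝ := ∫ w, ee p.1 (X w) * ee p.2 (Y w) ∂P

lemma KK_int (hX : Measurable X) (hY : Measurable Y) (hXY : Integrable (fun w => X w * Y w) P) :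
    Integrable (KK P X Y) (volume.prod volume) :=
  (hoeff_int P X Y hX hY hXY).integral_prod_left

lemma KK_integral (hX : Measurable X) (hY : Measurable Y)
    (hXY : Integrable (fun w => X w * Y w) P) :
    ∫ p, KK P X Y p ∂(volume.prod volume) = ∫ w, X w * Y w ∂P := by
  unfold KK
  rw [integral_integral_swap (f := fun (p : ℝ × ℝ) w => ee p.1 (X w) * ee p.2 (Y w))
    (hoeff_int P X Y hX hY hXY)]
  congr 1; funext w
  rw [integral_prod_mul (fun s => ee s (X w)) (fun t => ee t (Y w)), integral_ee, integral_ee]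

/-- joint survival function -/
noncomputable def SV (p : ℝ × ℝ) : ℝ := P.real {w | p.1 < X w ∧ p.2 < Y w}

lemma meas_gt {X : Ω → ℝ} (hX : Measurable X) (s : ℝ) : MeasurableSet {w | s < X w} :=
  measurableSet_lt measurable_const hX

lemma lin (A B C : Ω → ℝ) (b c k : ℝ) (hA : Integrable A P)
    (hB : Integrable B P) (hC : Integrable C P) :
    ∫ w, (A w - b * B w - c * C w + k) ∂P = ∫ w, A w ∂P - b * ∫ w, B w ∂P - c * ∫ w, C w ∂P + k := by
  have h1 : Integrable (fun w => b * B w) P := hB.const_mul b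
  have h2 : Integrable (fun w => c * C w) P := hC.const_mul c
  have h3 : Integrable (fun w => A w - b * B w) P := hA.sub h1
  have h4 : Integrable (fun w => A w - b * B w - c * C w) P := h3.sub h2
  rw [integral_add h4 (integrable_const _), integral_sub h3 h2, integral_sub hA h1,
    integral_const_mul, integral_const_mul, integral_const, probReal_univ, one_smul]

lemma KK_eq (hX : Measurable X) (hY : Measurable Y) (p : ℝ × ℝ) :
    KK P X Y p = SV P X Y p - (Iio 0).indicator 1 p.2 * (P.map X).real (Ioi p.1)
      - (Iio 0).indicator 1 p.1 * (P.map Y).real (Ioi p.2)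
      + (Iio 0).indicator 1 p.1 * (Iio 0).indicator 1 p.2 := by
  have h : ∀ w, ee p.1 (X w) * ee p.2 (Y w) =
      ({w | p.1 < X w ∧ p.2 < Y w}.indicator 1 w : ℝ)
      - (Iio 0).indicator 1 p.2 * ({w | p.1 < X w}.indicator 1 w)
      - (Iio 0).indicator 1 p.1 * ({w | p.2 < Y w}.indicator 1 w)
      + (Iio 0).indicator 1 p.1 * (Iio 0).indicator 1 p.2 := by
    intro w
    simp only [ee, indicator, mem_Ioi, mem_Iio, Pi.one_apply]
    by_cases h1 : p.1 < X w <;> by_cases h2 : p.2 < Y w <;> by_cases h3 : p.1 < 0 <;>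
      by_cases h4 : p.2 < 0 <;> simp [h1, h2, h3, h4]
  have mX := meas_gt hX p.1
  have mY := meas_gt hY p.2
  have mXY : MeasurableSet {w | p.1 < X w ∧ p.2 < Y w} := mX.inter mY
  have ii : ∀ A : Set Ω, MeasurableSet A → Integrable (A.indicator (1 : Ω → ℝ)) P := fun A hA =>
    (integrable_const (1:ℝ)).indicator hA
  unfold KK
  simp_rw [h]
  rw [lin P _ _ _ _ _ _ (ii _ mXY) (ii _ mX) (ii _ mY),
    integral_indicator_one mXY, integral_indicator_one mX, integral_indicator_one mY,
    map_measureReal_apply hX measurableSet_Ioi, map_measureReal_apply hY measurableSet_Ioi]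
  rfl

lemma SV_cont (hX : Measurable X) (hY : Measurable Y) (aX : ∀ x, P.map X {x} = 0)
    (aY : ∀ x, P.map Y {x} = 0) : Continuous (SV P X Y) := by
  have hE : SV P X Y = fun p => ∫ w, ({w | p.1 < X w ∧ p.2 < Y w}.indicator 1 w : ℝ) ∂P := by
    funext p
    have mXY : MeasurableSet {w | p.1 < X w ∧ p.2 < Y w} := (meas_gt hX p.1).inter (meas_gt hY p.2)
    rw [integral_indicator_one mXY]
    rfl
  rw [hE, continuous_iff_continuousAt]
  intro p
  refine continuousAt_of_dominated (bound := fun _ => 1) ?_ ?_ (integrable_const _) ?_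
  · exact Eventually.of_forall fun q => (measurable_one.indicator
      ((meas_gt hX q.1).inter (meas_gt hY q.2))).aestronglyMeasurable
  · refine Eventually.of_forall fun q => ae_of_all _ fun w => ?_
    simp only [indicator]; split_ifs <;> simp
  · have h1 : ∀ᵐ w ∂P, X w ≠ p.1 := by
      have := aX p.1
      rw [Measure.map_apply hX (measurableSet_singleton _)] at this
      rw [ae_iff]; simpa using! this
    have h2 : ∀ᵐ w ∂P, Y w ≠ p.2 := by
      have := aY p.2
      rw [Measure.map_apply hY (measurableSet_singleton _)] at this
      rw [ae_iff]; simpa using! this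
    filter_upwards [h1, h2] with w hw1 hw2
    have e1 : ∀ᶠ q : ℝ × ℝ in 𝓝 p, (q.1 < X w ↔ p.1 < X w) := by
      rcases lt_or_gt_of_ne hw1 with h | h
      · filter_upwards [continuous_fst.continuousAt.eventually (lt_mem_nhds h)] with q hq
        exact ⟨fun h' => absurd h' (not_lt.2 hq.le), fun h' => absurd h' (not_lt.2 h.le)⟩
      · filter_upwards [continuous_fst.continuousAt.eventually (gt_mem_nhds h)] with q hq
        exact ⟨fun _ => h, fun _ => hq⟩
    have e2 : ∀ᶠ q : ℝ × ℝ in 𝓝 p, (q.2 < Y w ↔ p.2 < Y w) := by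
      rcases lt_or_gt_of_ne hw2 with h | h
      · filter_upwards [continuous_snd.continuousAt.eventually (lt_mem_nhds h)] with q hq
        exact ⟨fun h' => absurd h' (not_lt.2 hq.le), fun h' => absurd h' (not_lt.2 h.le)⟩
      · filter_upwards [continuous_snd.continuousAt.eventually (gt_mem_nhds h)] with q hq
        exact ⟨fun _ => h, fun _ => hq⟩
    refine continuousAt_const.congr (f := fun _ =>
      ({w | p.1 < X w ∧ p.2 < Y w}.indicator 1 w : ℝ)) ?_
    filter_upwards [e1, e2] with q h1 h2
    simp [indicator, h1, h2]

end

section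
variable {Ω : Type*} [MeasurableSpace Ω] (P : Measure Ω) [IsProbabilityMeasure P] (X Y : Ω → ℝ)
  {Ω' : Type*} [MeasurableSpace Ω'] (P' : Measure Ω') [IsProbabilityMeasure P'] (X' Y' : Ω' → ℝ)

lemma compare (hX : Measurable X) (hY : Measurable Y) (hXY : Integrable (fun w => X w * Y w) P)
    (hX' : Measurable X') (hY' : Measurable Y') (hXY' : Integrable (fun w => X' w * Y' w) P')
    (mX : P.map X = P'.map X') (mY : P.map Y = P'.map Y')
    (hle : ∀ p, SV P X Y p ≤ SV P' X' Y' p) :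
    ∫ w, X w * Y w ∂P ≤ ∫ w, X' w * Y' w ∂P' ∧
    (∫ w, X w * Y w ∂P = ∫ w, X' w * Y' w ∂P' → (∀ x, P.map X {x} = 0) → (∀ x, P.map Y {x} = 0) →
      SV P X Y = SV P' X' Y') := by
  have hK : ∀ p, KK P X Y p ≤ KK P' X' Y' p := fun p => by
    rw [KK_eq P X Y hX hY, KK_eq P' X' Y' hX' hY', mX, mY]
    linarith [hle p]
  rw [← KK_integral P X Y hX hY hXY, ← KK_integral P' X' Y' hX' hY' hXY']
  refine ⟨integral_mono (KK_int P X Y hX hY hXY) (KK_int P' X' Y' hX' hY' hXY') hK, ?_⟩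
  intro hE aX aY
  have h1 := (integral_eq_iff_of_ae_le (KK_int P X Y hX hY hXY) (KK_int P' X' Y' hX' hY' hXY')
    (ae_of_all _ hK)).1 hE
  refine (Continuous.ae_eq_iff_eq (μ := (volume.prod volume : Measure (ℝ × ℝ)))
    (SV_cont P X Y hX hY aX aY)
    (SV_cont P' X' Y' hX' hY' (by rwa [← mX]) (by rwa [← mY]))).1 ?_
  filter_upwards [h1] with p hp
  rw [KK_eq P X Y hX hY, KK_eq P' X' Y' hX' hY', mX, mY] at hp
  linarith
end

section
variable {Ω : Type*} [MeasurableSpace Ω] (P : Measure Ω) [IsProbabilityMeasure P] (X Y : Ω → ℝ)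

lemma SV_le (hX : Measurable X) (hY : Measurable Y) (p : ℝ × ℝ) : 
    SV P X Y p ≤ min (1 - cdf (P.map X) p.1) (1 - cdf (P.map Y) p.2) := by
  have := Measure.isProbabilityMeasure_map (μ := P) hX.aemeasurable
  have := Measure.isProbabilityMeasure_map (μ := P) hY.aemeasurable
  rw [cdf_eq_real, cdf_eq_real, ← probReal_compl_eq_one_sub measurableSet_Iic,
    ← probReal_compl_eq_one_sub measurableSet_Iic, compl_Iic, compl_Iic,
    map_measureReal_apply hX measurableSet_Ioi, map_measureReal_apply hY measurableSet_Ioi]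
  exact le_min (measureReal_mono fun w hw => hw.1) (measureReal_mono fun w hw => hw.2)

/-- optimal coupling -/
lemma SV_tr (μ ν ρ : Measure ℝ) [IsProbabilityMeasure μ] (h : ∀ x, μ {x} = 0) (p : ℝ × ℝ) :
    SV μ (tr μ ν) (tr μ ρ) p = min (1 - cdf ν p.1) (1 - cdf ρ p.2) := by
  have hm : ∀ u : ℝ, MeasurableSet {x | cdf μ x ≤ u} := fun u =>
    measurableSet_le (cont_cdf μ h).measurable measurable_const
  set u := max (cdf ν p.1) (cdf ρ p.2) with hu
  have h0 : 0 ≤ u := (cdf_nonneg ν p.1).trans (le_max_left _ _)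
  have h1 : u ≤ 1 := max_le (cdf_le_one _ _) (cdf_le_one _ _)
  have : SV μ (tr μ ν) (tr μ ρ) p = μ.real {x | cdf μ x ≤ u}ᶜ := by
    refine measureReal_congr ?_
    filter_upwards [tr_le_ae μ ν h, tr_le_ae μ ρ h] with x h1 h2
    refine propext ?_
    change (p.1 < tr μ ν x ∧ p.2 < tr μ ρ x) ↔ ¬ (cdf μ x ≤ u)
    rw [← not_le, ← not_le, h1, h2, hu, le_max_iff, not_or]
  rw [this, probReal_compl_eq_one_sub (hm u), measureReal_def, measure_cdf_le' μ h h0 h1,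
    ENNReal.toReal_ofReal h0, hu]
  rcases le_total (cdf ν p.1) (cdf ρ p.2) with h | h
  · rw [max_eq_right h, min_eq_right (by linarith)]
  · rw [max_eq_left h, min_eq_left (by linarith)]

lemma cdf_eq_of_SV (hX : Measurable X) (hY : Measurable Y) (aX : ∀ x, P.map X {x} = 0)
    (aY : ∀ x, P.map Y {x} = 0)
    (hS : ∀ p, SV P X Y p = min (1 - cdf (P.map X) p.1) (1 - cdf (P.map Y) p.2)) :
    ∀ᵐ w ∂P, cdf (P.map X) (X w) ≤ cdf (P.map Y) (Y w) ∧
      cdf (P.map Y) (Y w) ≤ cdf (P.map X) (X w) := by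
  have iX := Measure.isProbabilityMeasure_map (μ := P) hX.aemeasurable
  have iY := Measure.isProbabilityMeasure_map (μ := P) hY.aemeasurable
  have key : ∀ᵐ w ∂P, ∀ q : ℚ, 0 < (q:ℝ) → (q:ℝ) < 1 →
      ¬ (cdf (P.map X) (X w) < q ∧ (q:ℝ) < cdf (P.map Y) (Y w)) ∧
      ¬ (cdf (P.map Y) (Y w) < q ∧ (q:ℝ) < cdf (P.map X) (X w)) := by
    rw [ae_all_iff]
    intro q
    by_cases hq : 0 < (q:ℝ) ∧ (q:ℝ) < 1
    swap
    · exact ae_of_all _ fun w h0 h1 => absurd ⟨h0, h1⟩ hq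
    obtain ⟨s, hs⟩ := exists_cdf_eq (P.map X) aX hq.1 hq.2
    obtain ⟨t, ht⟩ := exists_cdf_eq (P.map Y) aY hq.1 hq.2
    have hst := hS (s, t)
    simp only [hs, ht, min_self] at hst
    have mXY : MeasurableSet {w | s < X w ∧ t < Y w} := (meas_gt hX s).inter (meas_gt hY t)
    have rX : P.real {w | s < X w} = 1 - q := by
      rw [← hs, cdf_eq_real, ← probReal_compl_eq_one_sub measurableSet_Iic, compl_Iic,
        map_measureReal_apply hX measurableSet_Ioi]; rfl
    have rY : P.real {w | t < Y w} = 1 - q := by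
      rw [← ht, cdf_eq_real, ← probReal_compl_eq_one_sub measurableSet_Iic, compl_Iic,
        map_measureReal_apply hY measurableSet_Ioi]; rfl
    have n1 : P ({w | s < X w} \ {w | s < X w ∧ t < Y w}) = 0 := by
      have hsub : {w | s < X w ∧ t < Y w} ⊆ {w | s < X w} := fun w hw => hw.1
      rw [← measureReal_eq_zero_iff, measureReal_sdiff hsub mXY, rX]
      change 1 - (q:ℝ) - SV P X Y (s,t) = 0
      rw [hst, sub_self]
    have n2 : P ({w | t < Y w} \ {w | s < X w ∧ t < Y w}) = 0 := by
      have hsub : {w | s < X w ∧ t < Y w} ⊆ {w | t < Y w} := fun w hw => hw.2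
      rw [← measureReal_eq_zero_iff, measureReal_sdiff hsub mXY, rY]
      change 1 - (q:ℝ) - SV P X Y (s,t) = 0
      rw [hst, sub_self]
    have a1 := measure_eq_zero_iff_ae_notMem.1 n1
    have a2 := measure_eq_zero_iff_ae_notMem.1 n2
    filter_upwards [a1, a2] with w h1 h2 _ _
    constructor
    · rintro ⟨h3, h4⟩
      rw [← hs] at h3; rw [← ht] at h4
      exact h2 ⟨(monotone_cdf _).reflect_lt h4, fun hh =>
        absurd ((monotone_cdf _).reflect_lt h3) (not_lt.2 hh.1.le)⟩
    · rintro ⟨h3, h4⟩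
      rw [← ht] at h3; rw [← hs] at h4
      exact h1 ⟨(monotone_cdf _).reflect_lt h4, fun hh =>
        absurd ((monotone_cdf _).reflect_lt h3) (not_lt.2 hh.2.le)⟩
  filter_upwards [key] with w hw
  constructor
  · by_contra hlt
    obtain ⟨q, q1, q2⟩ := exists_rat_btwn (not_le.1 hlt)
    exact (hw q ((cdf_nonneg _ _).trans_lt q1) (q2.trans_le (cdf_le_one _ _))).2 ⟨q1, q2⟩
  · by_contra hlt
    obtain ⟨q, q1, q2⟩ := exists_rat_btwn (not_le.1 hlt)
    exact (hw q ((cdf_nonneg _ _).trans_lt q1) (q2.trans_le (cdf_le_one _ _))).1 ⟨q1, q2⟩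
end
end MMOT

namespace MMOT

lemma memLp_of_map {Ω : Type*} [MeasurableSpace Ω] {P : Measure Ω} {X : Ω → ℝ} (hX : Measurable X)
    {μ : Measure ℝ} (h : P.map X = μ) (h2 : Integrable (fun x : ℝ => x ^ 2) μ) : MemLp X 2 P := by
  rw [memLp_two_iff_integrable_sq hX.aestronglyMeasurable]
  subst h
  exact h2.comp_measurable hX

lemma sq_of_map {Ω : Type*} [MeasurableSpace Ω] {P : Measure Ω} {X : Ω → ℝ} (hX : Measurable X)
    {μ : Measure ℝ} (h : P.map X = μ) : ∫ w, X w ^ 2 ∂P = ∫ x, x ^ 2 ∂μ := by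
  subst h
  have hm : AEStronglyMeasurable (fun x : ℝ => x ^ 2) (P.map X) := by fun_prop
  exact (integral_map hX.aemeasurable hm).symm

lemma lim_map {μ ν κ : Measure ℝ} [IsProbabilityMeasure μ] [IsProbabilityMeasure κ] {a : ℝ}
    (h : ν = (μ.prod (κ.map fun z => a * z)).map fun p => p.1 + p.2) :
    (μ.prod κ).map (fun q => q.1 + a * q.2) = ν := by
  have hm : Measurable (fun z : ℝ => a * z) := by fun_prop
  have h1 := Measure.map_prod_map μ κ measurable_id hm
  rw [Measure.map_id] at h1
  rw [h, h1, Measure.map_map (by fun_prop) (by fun_prop)]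
  rfl

lemma kappa_L2 {μ ν κ : Measure ℝ} [IsProbabilityMeasure μ] [IsProbabilityMeasure κ] {a : ℝ}
    (ha : 0 < a) (h : (μ.prod κ).map (fun q => q.1 + a * q.2) = ν)
    (hμ2 : Integrable (fun x : ℝ => x ^ 2) μ) (hν2 : Integrable (fun x : ℝ => x ^ 2) ν) :
    Integrable (fun x : ℝ => x ^ 2) κ := by
  have h1 : MemLp (fun q : ℝ × ℝ => q.1 + a * q.2) 2 (μ.prod κ) :=
    memLp_of_map (by fun_prop) h hν2
  have h2 : MemLp (fun q : ℝ × ℝ => q.1) 2 (μ.prod κ) :=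
    memLp_of_map measurable_fst (by simp) hμ2
  have h3 : MemLp (fun q : ℝ × ℝ => q.2) 2 (μ.prod κ) := by
    have := (h1.sub h2).const_mul a⁻¹
    refine this.congr_norm (by fun_prop) (ae_of_all _ fun q => ?_)
    simp [ha.ne']
  have h4 := (memLp_two_iff_integrable_sq (by fun_prop)).1 h3
  have h5 : (μ.prod κ).map Prod.snd = κ := by simp
  rw [← h5, integrable_map_measure (by fun_prop) (by fun_prop)]
  exact h4

lemma nu_sq {μ ν κ : Measure ℝ} [IsProbabilityMeasure μ] [IsProbabilityMeasure κ] {a : ℝ}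
    (h : (μ.prod κ).map (fun q => q.1 + a * q.2) = ν)
    (hμ2 : Integrable (fun x : ℝ => x ^ 2) μ)
    (hκ2 : Integrable (fun x : ℝ => x ^ 2) κ) (hκ0 : ∫ z, z ∂κ = 0) :
    ∫ y, y ^ 2 ∂ν = ∫ x, x ^ 2 ∂μ + a ^ 2 * ∫ z, z ^ 2 ∂κ := by
  have hx : MemLp (fun q : ℝ × ℝ => q.1) 2 (μ.prod κ) :=
    memLp_of_map measurable_fst (by simp) hμ2
  have hz : MemLp (fun q : ℝ × ℝ => q.2) 2 (μ.prod κ) :=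
    memLp_of_map measurable_snd (by simp) hκ2
  rw [← sq_of_map (by fun_prop) h]
  have i1 : Integrable (fun q : ℝ × ℝ => q.1 ^ 2) (μ.prod κ) := hx.integrable_sq
  have i2 : Integrable (fun q : ℝ × ℝ => a ^ 2 * q.2 ^ 2) (μ.prod κ) := hz.integrable_sq.const_mul _
  have i3 : Integrable (fun q : ℝ × ℝ => 2 * a * (q.1 * q.2)) (μ.prod κ) :=
    (hx.integrable_mul hz).const_mul _
  have i12 : Integrable (fun q : ℝ × ℝ => q.1 ^ 2 + a ^ 2 * q.2 ^ 2) (μ.prod κ) := i1.add i2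
  have : ∀ q : ℝ × ℝ, (q.1 + a * q.2) ^ 2 = q.1 ^ 2 + a ^ 2 * q.2 ^ 2 + 2 * a * (q.1 * q.2) :=
    fun q => by ring
  simp_rw [this]
  rw [integral_add i12 i3, integral_add i1 i2, integral_const_mul, integral_const_mul,
    integral_prod_mul (fun x : ℝ => x) (fun z : ℝ => z), hκ0,
    sq_of_map measurable_fst (show (μ.prod κ).map Prod.fst = μ by simp),
    sq_of_map measurable_snd (show (μ.prod κ).map Prod.snd = κ by simp)]
  ring

section
variable {d : ℕ} {μ ν : Fin d → Measure ℝ} {π : Measure (Vec d × Vec d)}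

lemma mart_cross (hπ : π ∈ PairMartSet μ ν) (hμ2 : ∀ i, Integrable (fun x : ℝ => x ^ 2) (μ i))
    (hν2 : ∀ i, Integrable (fun x : ℝ => x ^ 2) (ν i)) (i j : Fin d) :
    ∫ p, p.1 i * p.2 j ∂π = ∫ p, p.1 i * p.1 j ∂π := by
  obtain ⟨hp, hX, hY, hc⟩ := hπ
  have lX : MemLp (fun p : Vec d × Vec d => p.1 i) 2 π := memLp_of_map (by fun_prop) (hX i) (hμ2 i)
  have lY : MemLp (fun p : Vec d × Vec d => p.2 j) 2 π := memLp_of_map (by fun_prop) (hY j) (hν2 j)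
  have hm : MeasurableSpace.comap (Prod.fst : Vec d × Vec d → Vec d) inferInstance ≤
    (inferInstance : MeasurableSpace (Vec d × Vec d)) := measurable_fst.comap_le
  have hsm : StronglyMeasurable[MeasurableSpace.comap (Prod.fst : Vec d × Vec d → Vec d) inferInstance]
      (fun p : Vec d × Vec d => p.1 i) :=
    (((measurable_pi_apply i).comp (comap_measurable _)) :
      Measurable[MeasurableSpace.comap (Prod.fst : Vec d × Vec d → Vec d) inferInstance] _).stronglyMeasurable
  have h1 := condExp_mul_of_stronglyMeasurable_left (μ := π) hsm (lX.integrable_mul lY)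
    (lY.integrable (by norm_num))
  have h2 := integral_condExp (μ := π) (f := (fun p : Vec d × Vec d => p.1 i) * fun p : Vec d × Vec d => p.2 j) hm
  have h3 : ∫ p, ((fun p : Vec d × Vec d => p.1 i) * fun p : Vec d × Vec d => p.2 j) p ∂π = ∫ p, p.1 i * p.2 j ∂π := rfl
  rw [← h3, ← h2]
  refine integral_congr_ae ?_
  filter_upwards [h1, hc j] with p e1 e2
  rw [e1, Pi.mul_apply, e2]

lemma upper (hπ : π ∈ PairMartSet μ ν) (hμ2 : ∀ i, Integrable (fun x : ℝ => x ^ 2) (μ i))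
    (hν2 : ∀ i, Integrable (fun x : ℝ => x ^ 2) (ν i)) {a : Fin d → ℝ} (ha : ∀ i, 0 < a i) {v : ℝ}
    (hv : ∀ i, ∫ y, y ^ 2 ∂(ν i) = ∫ x, x ^ 2 ∂(μ i) + a i ^ 2 * v) (i j : Fin d) :
    ∫ p, p.2 i * p.2 j ∂π ≤ ∫ p, p.1 i * p.1 j ∂π + a i * a j * v := by
  have cr := mart_cross hπ hμ2 hν2
  obtain ⟨hp, hX, hY, hc⟩ := hπ
  have lX : ∀ i, MemLp (fun p : Vec d × Vec d => p.1 i) 2 π :=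
    fun i => memLp_of_map (by fun_prop) (hX i) (hμ2 i)
  have lY : ∀ i, MemLp (fun p : Vec d × Vec d => p.2 i) 2 π :=
    fun i => memLp_of_map (by fun_prop) (hY i) (hν2 i)
  have lD : ∀ i, MemLp (fun p : Vec d × Vec d => p.2 i - p.1 i) 2 π := fun i => (lY i).sub (lX i)
  have hD : ∀ i j, ∫ p, (p.2 i - p.1 i) * (p.2 j - p.1 j) ∂π =
      ∫ p, p.2 i * p.2 j ∂π - ∫ p, p.1 i * p.1 j ∂π := by
    intro i j
    have i1 : Integrable (fun p : Vec d × Vec d => p.2 i * p.2 j) π := (lY i).integrable_mul (lY j)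
    have i2 : Integrable (fun p : Vec d × Vec d => p.1 i * p.2 j) π := (lX i).integrable_mul (lY j)
    have i3 : Integrable (fun p : Vec d × Vec d => p.1 j * p.2 i) π := (lX j).integrable_mul (lY i)
    have i4 : Integrable (fun p : Vec d × Vec d => p.1 i * p.1 j) π := (lX i).integrable_mul (lX j)
    have i12 : Integrable (fun p : Vec d × Vec d => p.2 i * p.2 j - p.1 i * p.2 j) π := i1.sub i2
    have i123 : Integrable (fun p : Vec d × Vec d => p.2 i * p.2 j - p.1 i * p.2 j - p.1 j * p.2 i) π :=
      i12.sub i3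
    have : ∀ p : Vec d × Vec d, (p.2 i - p.1 i) * (p.2 j - p.1 j) =
      p.2 i * p.2 j - p.1 i * p.2 j - p.1 j * p.2 i + p.1 i * p.1 j := fun p => by ring
    simp_rw [this]
    rw [integral_add i123 i4, integral_sub i12 i3, integral_sub i1 i2, cr i j, cr j i]
    have : ∫ p, p.1 j * p.1 i ∂π = ∫ p, p.1 i * p.1 j ∂π := by simp_rw [mul_comm]
    rw [this]; ring
  have hDD : ∀ i, ∫ p, (p.2 i - p.1 i) * (p.2 i - p.1 i) ∂π = a i ^ 2 * v := by
    intro i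
    rw [hD]
    have e1 := sq_of_map (by fun_prop) (hX i)
    have e2 := sq_of_map (by fun_prop) (hY i)
    simp_rw [pow_two] at e1 e2
    have e3 := hv i
    simp_rw [pow_two] at e3
    rw [e1, e2, e3]; ring
  have hnn : 0 ≤ ∫ p, (a j * (p.2 i - p.1 i) - a i * (p.2 j - p.1 j)) ^ 2 ∂π :=
    integral_nonneg fun p => sq_nonneg _
  have hex : ∫ p, (a j * (p.2 i - p.1 i) - a i * (p.2 j - p.1 j)) ^ 2 ∂π =
      a j ^ 2 * ∫ p, (p.2 i - p.1 i) * (p.2 i - p.1 i) ∂π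
      - 2 * a i * a j * ∫ p, (p.2 i - p.1 i) * (p.2 j - p.1 j) ∂π
      + a i ^ 2 * ∫ p, (p.2 j - p.1 j) * (p.2 j - p.1 j) ∂π := by
    have i1 : Integrable (fun p : Vec d × Vec d => a j ^ 2 * ((p.2 i - p.1 i) * (p.2 i - p.1 i))) π :=
      ((lD i).integrable_mul (lD i)).const_mul _
    have i2 : Integrable (fun p : Vec d × Vec d => 2 * a i * a j * ((p.2 i - p.1 i) * (p.2 j - p.1 j))) π :=
      ((lD i).integrable_mul (lD j)).const_mul _
    have i3 : Integrable (fun p : Vec d × Vec d => a i ^ 2 * ((p.2 j - p.1 j) * (p.2 j - p.1 j))) π :=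
      ((lD j).integrable_mul (lD j)).const_mul _
    have i12 : Integrable (fun p : Vec d × Vec d => a j ^ 2 * ((p.2 i - p.1 i) * (p.2 i - p.1 i)) -
      2 * a i * a j * ((p.2 i - p.1 i) * (p.2 j - p.1 j))) π := i1.sub i2
    rw [← integral_const_mul, ← integral_const_mul, ← integral_const_mul, ← integral_sub i1 i2,
      ← integral_add i12 i3]
    congr 1; funext p; ring
  rw [hex, hDD, hDD, hD] at hnn
  have hpos : 0 < a i * a j := mul_pos (ha i) (ha j)
  have : 0 ≤ (a i * a j) * (a i * a j * v - (∫ p, p.2 i * p.2 j ∂π - ∫ p, p.1 i * p.1 j ∂π)) := by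
    linarith
  have := nonneg_of_mul_nonneg_right this hpos
  linarith

/-- candidate optimizer -/
noncomputable def starMap (μ : Fin d → Measure ℝ) (a : Fin d → ℝ) (i0 : Fin d) (q : ℝ × ℝ) :
    Vec d × Vec d :=
  (fun i => tr (μ i0) (μ i) q.1, fun i => tr (μ i0) (μ i) q.1 + a i * q.2)

lemma measurable_starMap (a : Fin d → ℝ) (i0 : Fin d) : Measurable (starMap μ a i0) := by
  have : ∀ i, Measurable (tr (μ i0) (μ i)) := fun i => measurable_tr _ _
  unfold starMap
  fun_prop

noncomputable def star (μ : Fin d → Measure ℝ) (κ : Measure ℝ) (a : Fin d → ℝ) (i0 : Fin d) :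
    Measure (Vec d × Vec d) := ((μ i0).prod κ).map (starMap μ a i0)

lemma star_mem (κ : Measure ℝ) [IsProbabilityMeasure κ] (hμp : ∀ i, IsProbabilityMeasure (μ i))
    (hcont : ∀ i (x : ℝ), μ i {x} = 0) (hκ1 : Integrable (fun z : ℝ => z) κ)
    (hκ0 : ∫ z, z ∂κ = 0)
    (hμ2 : ∀ i, Integrable (fun x : ℝ => x ^ 2) (μ i))
    (a : Fin d → ℝ) (i0 : Fin d)
    (hν : ∀ i, ((μ i).prod κ).map (fun q => q.1 + a i * q.2) = ν i) :
    star μ κ a i0 ∈ PairMartSet μ ν := by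
  have mS := measurable_starMap (μ := μ) a i0
  have mT : ∀ i, Measurable (tr (μ i0) (μ i)) := fun i => measurable_tr _ _
  have hT : ∀ i, (μ i0).map (tr (μ i0) (μ i)) = μ i := fun i => map_tr _ _ (hcont i0)
  have hP : IsProbabilityMeasure (star μ κ a i0) := Measure.isProbabilityMeasure_map mS.aemeasurable
  have tI : ∀ i, Integrable (tr (μ i0) (μ i)) (μ i0) := fun i =>
    (memLp_of_map (mT i) (hT i) (hμ2 i)).integrable (by norm_num)
  have tI' : ∀ i, Integrable (fun q : ℝ × ℝ => tr (μ i0) (μ i) q.1) ((μ i0).prod κ) := fun i =>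
    (tI i).comp_fst κ
  have zI' : Integrable (fun q : ℝ × ℝ => q.2) ((μ i0).prod κ) := hκ1.comp_snd _
  refine ⟨hP, fun i => ?_, fun i => ?_, fun i => ?_⟩
  · rw [star, Measure.map_map (by fun_prop) mS]
    have : ((fun p : Vec d × Vec d => p.1 i) ∘ starMap μ a i0) = tr (μ i0) (μ i) ∘ Prod.fst := rfl
    rw [this, ← Measure.map_map (mT i) measurable_fst]
    simpa using hT i
  · rw [star, Measure.map_map (by fun_prop) mS]
    have h1 := Measure.map_prod_map (μ i0) κ (mT i) measurable_id
    rw [Measure.map_id, hT i] at h1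
    rw [← hν i, h1, Measure.map_map (by fun_prop) (by fun_prop)]
    rfl
  · have hm : MeasurableSpace.comap (Prod.fst : Vec d × Vec d → Vec d) inferInstance ≤
      (inferInstance : MeasurableSpace (Vec d × Vec d)) := measurable_fst.comap_le
    have hsm : StronglyMeasurable[MeasurableSpace.comap (Prod.fst : Vec d × Vec d → Vec d) inferInstance]
        (fun p : Vec d × Vec d => p.1 i) :=
      (((measurable_pi_apply i).comp (comap_measurable _)) :
        Measurable[MeasurableSpace.comap (Prod.fst : Vec d × Vec d → Vec d) inferInstance] _).stronglyMeasurable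
    have hXi : Integrable (fun p : Vec d × Vec d => p.1 i) (star μ κ a i0) := by
      rw [star, integrable_map_measure (by fun_prop) mS.aemeasurable]
      exact tI' i
    have hYi : Integrable (fun p : Vec d × Vec d => p.2 i) (star μ κ a i0) := by
      rw [star, integrable_map_measure (by fun_prop) mS.aemeasurable]
      exact (tI' i).add (zI'.const_mul (a i))
    symm
    refine ae_eq_condExp_of_forall_setIntegral_eq hm hYi (fun s _ _ => hXi.integrableOn) ?_
      hsm.aestronglyMeasurable
    rintro s ⟨B, hB, rfl⟩ -
    have hB' : MeasurableSet ((Prod.fst : Vec d × Vec d → Vec d) ⁻¹' B) := measurable_fst hB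
    rw [star, setIntegral_map hB' (by fun_prop) mS.aemeasurable,
      setIntegral_map hB' (by fun_prop) mS.aemeasurable]
    have mC : MeasurableSet {x : ℝ | (fun i => tr (μ i0) (μ i) x) ∈ B} :=
      (measurable_pi_lambda _ mT) hB
    have hC : starMap μ a i0 ⁻¹' (Prod.fst ⁻¹' B) = {x : ℝ | (fun i => tr (μ i0) (μ i) x) ∈ B} ×ˢ univ := by
      ext q; simp [starMap]
    rw [hC]
    have e1 : ∫ q in {x : ℝ | (fun i => tr (μ i0) (μ i) x) ∈ B} ×ˢ univ, (starMap μ a i0 q).2 i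
        ∂((μ i0).prod κ) = ∫ q in {x : ℝ | (fun i => tr (μ i0) (μ i) x) ∈ B} ×ˢ univ,
          (starMap μ a i0 q).1 i ∂((μ i0).prod κ) +
          ∫ q in {x : ℝ | (fun i => tr (μ i0) (μ i) x) ∈ B} ×ˢ univ, a i * q.2 ∂((μ i0).prod κ) :=
      integral_add (tI' i).integrableOn (zI'.const_mul (a i)).integrableOn
    rw [e1, setIntegral_prod_mul (fun _ : ℝ => a i) (fun z : ℝ => z)]
    simp [hκ0]

lemma star_val (κ : Measure ℝ) [IsProbabilityMeasure κ] (hμp : ∀ i, IsProbabilityMeasure (μ i))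
    (hcont : ∀ i (x : ℝ), μ i {x} = 0)
    (hκ0 : ∫ z, z ∂κ = 0) (hκ2 : Integrable (fun z : ℝ => z ^ 2) κ)
    (hμ2 : ∀ i, Integrable (fun x : ℝ => x ^ 2) (μ i))
    (a : Fin d → ℝ) (i0 : Fin d) (i j : Fin d) :
    ∫ p, p.2 i * p.2 j ∂(star μ κ a i0) =
      ∫ x, tr (μ i0) (μ i) x * tr (μ i0) (μ j) x ∂(μ i0) + a i * a j * ∫ z, z ^ 2 ∂κ := by
  have mS := measurable_starMap (μ := μ) a i0
  have mT : ∀ i, Measurable (tr (μ i0) (μ i)) := fun i => measurable_tr _ _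
  have hT : ∀ i, (μ i0).map (tr (μ i0) (μ i)) = μ i := fun i => map_tr _ _ (hcont i0)
  have tI : ∀ i, MemLp (tr (μ i0) (μ i)) 2 (μ i0) := fun i =>
    memLp_of_map (mT i) (hT i) (hμ2 i)
  have zI : MemLp (fun z : ℝ => z) 2 κ := (memLp_two_iff_integrable_sq (by fun_prop)).2 hκ2
  have t1 : ∀ i, Integrable (tr (μ i0) (μ i)) (μ i0) := fun i => (tI i).integrable (by norm_num)
  have z1 : Integrable (fun z : ℝ => z) κ := zI.integrable (by norm_num)
  rw [star, integral_map mS.aemeasurable (by fun_prop)]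
  set f := tr (μ i0) (μ i)
  set g := tr (μ i0) (μ j)
  have i1 : Integrable (fun q : ℝ × ℝ => f q.1 * g q.1) ((μ i0).prod κ) :=
    Integrable.comp_fst (f := fun x => f x * g x) ((tI i).integrable_mul (tI j)) κ
  have i2 : Integrable (fun q : ℝ × ℝ => a j * (f q.1 * q.2)) ((μ i0).prod κ) :=
    ((t1 i).mul_prod z1).const_mul _
  have i3 : Integrable (fun q : ℝ × ℝ => a i * (g q.1 * q.2)) ((μ i0).prod κ) :=
    ((t1 j).mul_prod z1).const_mul _
  have i4 : Integrable (fun q : ℝ × ℝ => a i * a j * q.2 ^ 2) ((μ i0).prod κ) :=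
    (hκ2.comp_snd _).const_mul _
  have i12 : Integrable (fun q : ℝ × ℝ => f q.1 * g q.1 + a j * (f q.1 * q.2)) ((μ i0).prod κ) :=
    i1.add i2
  have i123 : Integrable (fun q : ℝ × ℝ => f q.1 * g q.1 + a j * (f q.1 * q.2) + a i * (g q.1 * q.2))
    ((μ i0).prod κ) := i12.add i3
  have : ∀ q : ℝ × ℝ, (starMap μ a i0 q).2 i * (starMap μ a i0 q).2 j =
      f q.1 * g q.1 + a j * (f q.1 * q.2) + a i * (g q.1 * q.2) + a i * a j * q.2 ^ 2 := by
    intro q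
    change (f q.1 + a i * q.2) * (g q.1 + a j * q.2) = _
    ring
  simp_rw [this]
  rw [integral_add i123 i4, integral_add i12 i3, integral_add i1 i2, integral_const_mul,
    integral_const_mul, integral_const_mul, integral_prod_mul f (fun z : ℝ => z),
    integral_prod_mul g (fun z : ℝ => z), hκ0,
    integral_fun_fst (fun x => f x * g x), integral_fun_snd (fun z : ℝ => z ^ 2)]
  simp

lemma covCost_integral (c : Fin d → Fin d → ℝ) 
    (h : ∀ i j, Integrable (fun p : Vec d × Vec d => p.2 i * p.2 j) π) :
    ∫ p, covCost c p.2 ∂π = ∑ i, ∑ j, if i < j then c i j * ∫ p, p.2 i * p.2 j ∂π else 0 := by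
  unfold covCost
  have hi : ∀ i j, Integrable (fun p : Vec d × Vec d => if i < j then c i j * p.2 i * p.2 j else 0) π := by
    intro i j
    split_ifs
    · simpa only [mul_assoc] using (h i j).const_mul (c i j)
    · simp
  rw [integral_finsetSum _ fun i _ => integrable_finsetSum _ fun j _ => hi i j]
  refine Finset.sum_congr rfl fun i _ => ?_
  rw [integral_finsetSum _ fun j _ => hi i j]
  refine Finset.sum_congr rfl fun j _ => ?_
  split_ifs
  · simp_rw [mul_assoc]; rw [integral_const_mul]
  · simp

end

lemma first_marginal {d : ℕ} (i0 : Fin d)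
    (μ ν : Fin d → Measure ℝ)
    (hμprob : ∀ i, IsProbabilityMeasure (μ i))
    (hμ2 : ∀ i, Integrable (fun x : ℝ => x ^ 2) (μ i))
    (hν2 : ∀ i, Integrable (fun x : ℝ => x ^ 2) (ν i))
    (hcont : ∀ i (x : ℝ), μ i {x} = 0)
    (c : Fin d → Fin d → ℝ) (hc : ∀ i j, i < j → 0 ≤ c i j)
    (hconn : ∀ i j : Fin d, Relation.ReflTransGen (AdjRel c) i j)
    (a : Fin d → ℝ) (ha : ∀ i, 0 < a i)
    (κ : Measure ℝ) (hLIM : LIM μ ν a κ)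
    (π : Measure (Vec d × Vec d))
    (hπ : IsMaximizer μ ν c π) :
    π.map Prod.fst = (μ i0).map (fun x i => tr (μ i0) (μ i) x) := by
  obtain ⟨hκp, hκ1, hκ0, -, hν⟩ := hLIM
  have hν' : ∀ i, ((μ i).prod κ).map (fun q => q.1 + a i * q.2) = ν i := fun i => lim_map (hν i)
  have hκ2 := kappa_L2 (ha i0) (hν' i0) (hμ2 i0) (hν2 i0)
  have hv := fun i => nu_sq (hν' i) (hμ2 i) hκ2 hκ0
  have sm := star_mem κ hμprob hcont hκ1 hκ0 hμ2 a i0 hν'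
  have mT : ∀ i, Measurable (tr (μ i0) (μ i)) := fun i => measurable_tr _ _
  have hT : ∀ i, (μ i0).map (tr (μ i0) (μ i)) = μ i := fun i => map_tr _ _ (hcont i0)
  have tI : ∀ i, MemLp (tr (μ i0) (μ i)) 2 (μ i0) := fun i =>
    memLp_of_map (mT i) (hT i) (hμ2 i)
  obtain ⟨hmem, hmax⟩ := hπ
  have hup := upper hmem hμ2 hν2 ha hv
  have hmax' := hmax _ sm
  have hYY : ∀ ρ ∈ PairMartSet μ ν, ∀ i j, Integrable (fun p : Vec d × Vec d => p.2 i * p.2 j) ρ :=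
    fun ρ hρ i j => (memLp_of_map (by fun_prop) (hρ.2.2.1 i) (hν2 i)).integrable_mul
      (memLp_of_map (by fun_prop) (hρ.2.2.1 j) (hν2 j))
  rw [covCost_integral c (hYY _ sm), covCost_integral c (hYY _ hmem)] at hmax'
  obtain ⟨hp, hX, hY, -⟩ := hmem
  have lX : ∀ i, MemLp (fun p : Vec d × Vec d => p.1 i) 2 π :=
    fun i => memLp_of_map (by fun_prop) (hX i) (hμ2 i)
  have mX : ∀ i, Measurable (fun p : Vec d × Vec d => p.1 i) := fun i => by fun_prop
  have hcomp := fun i j => compare π (fun p => p.1 i) (fun p => p.1 j) (μ i0) (tr (μ i0) (μ i))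
    (tr (μ i0) (μ j)) (mX i) (mX j) ((lX i).integrable_mul (lX j)) (mT i) (mT j)
    ((tI i).integrable_mul (tI j)) (by rw [hX, hT]) (by rw [hX, hT]) (fun p => by
      rw [SV_tr _ _ _ (hcont i0)]
      have := SV_le π (fun p => p.1 i) (fun p => p.1 j) (mX i) (mX j) p
      rwa [hX, hX] at this)
  have hV : ∀ i j, ∫ p, p.2 i * p.2 j ∂π ≤ ∫ p, p.2 i * p.2 j ∂(star μ κ a i0) := fun i j => by
    rw [star_val κ hμprob hcont hκ0 hκ2 hμ2]
    linarith [hup i j, (hcomp i j).1]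
  have hle : ∀ i j, (if i < j then c i j * ∫ p, p.2 i * p.2 j ∂π else 0) ≤
      (if i < j then c i j * ∫ p, p.2 i * p.2 j ∂(star μ κ a i0) else 0) := fun i j => by
    split_ifs with h
    · exact mul_le_mul_of_nonneg_left (hV i j) (hc i j h)
    · exact le_rfl
  have hEq := le_antisymm hmax' (Finset.sum_le_sum fun i _ => Finset.sum_le_sum fun j _ => hle i j)
  have hE1 := (Finset.sum_eq_sum_iff_of_le fun i _ => Finset.sum_le_sum fun j _ => hle i j).1 hEq.symm
  have edge : ∀ i j, i < j → 0 < c i j →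
      ∀ᵐ p ∂π, cdf (μ i) (p.1 i) = cdf (μ j) (p.1 j) := by
    intro i j hij hcij
    have h2 := (Finset.sum_eq_sum_iff_of_le fun j _ => hle i j).1 (hE1 i (Finset.mem_univ _)) j
      (Finset.mem_univ _)
    rw [if_pos hij, if_pos hij] at h2
    have h3 := mul_left_cancel₀ hcij.ne' h2
    rw [star_val κ hμprob hcont hκ0 hκ2 hμ2] at h3
    have h4 : ∫ p, p.1 i * p.1 j ∂π = ∫ x, tr (μ i0) (μ i) x * tr (μ i0) (μ j) x ∂(μ i0) := by
      linarith [hup i j, (hcomp i j).1]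
    have aX : ∀ i x, π.map (fun p => p.1 i) {x} = 0 := fun i x => by rw [hX]; exact hcont i x
    have h5 := (hcomp i j).2 h4 (aX i) (aX j)
    have h6 := cdf_eq_of_SV π (fun p => p.1 i) (fun p => p.1 j) (mX i) (mX j) (aX i) (aX j)
      (fun p => by rw [h5, SV_tr _ _ _ (hcont i0), hX, hX])
    rw [hX, hX] at h6
    filter_upwards [h6] with p hp using le_antisymm hp.1 hp.2
  have all : ∀ i, ∀ᵐ p ∂π, cdf (μ i0) (p.1 i0) = cdf (μ i) (p.1 i) := by
    intro i
    induction hconn i0 i with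
    | refl => exact ae_of_all _ fun _ => rfl
    | tail _ hadj ih =>
      rcases hadj with ⟨h1, h2⟩ | ⟨h1, h2⟩
      · filter_upwards [ih, edge _ _ h1 h2] with p e1 e2 using e1.trans e2
      · filter_upwards [ih, edge _ _ h1 h2] with p e1 e2 using e1.trans e2.symm
  have self : ∀ i, ∀ᵐ p ∂π, tr (μ i) (μ i) (p.1 i) = p.1 i := fun i => by
    have h1 : MemLp (fun x : ℝ => x) 2 (μ i) := (memLp_two_iff_integrable_sq (by fun_prop)).2 (hμ2 i)
    have := tr_self (μ i) (hcont i) (h1.integrable (by norm_num))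
    rw [← hX i] at this
    have h2 := ae_of_ae_map (mX i).aemeasurable this
    rwa [hX i] at h2
  have fin : (Prod.fst : Vec d × Vec d → Vec d) =ᵐ[π]
      (fun x i => tr (μ i0) (μ i) x) ∘ (fun p => p.1 i0) := by
    filter_upwards [ae_all_iff.2 all, ae_all_iff.2 self] with p h1 h2
    funext i
    rw [← h2 i]
    simp only [Function.comp_apply, tr, h1 i]
  rw [Measure.map_congr fin, ← Measure.map_map (measurable_pi_lambda _ mT) (mX i0), hX]

/-- uniqueness of the first marginal of MMOT maximizers for `d ∈ {2,3}`.
Under LIM marginals, a connected nonnegative coefficient graph and atomless first marginals,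
all maximizers of the covariance MMOT problem share the same first `d`-dimensional
marginal. -/
theorem mmot_covariance_unique_first_marginal {d : ℕ} (hd : d = 2 ∨ d = 3)
    (μ ν : Fin d → Measure ℝ)
    (hμprob : ∀ i, IsProbabilityMeasure (μ i)) (hνprob : ∀ i, IsProbabilityMeasure (ν i))
    (hμ2 : ∀ i, Integrable (fun x : ℝ => x ^ 2) (μ i))
    (hν2 : ∀ i, Integrable (fun x : ℝ => x ^ 2) (ν i))
    (hcont : ∀ i (x : ℝ), μ i {x} = 0)
    (c : Fin d → Fin d → ℝ) (hc : ∀ i j, i < j → 0 ≤ c i j)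
    (hconn : ∀ i j : Fin d, Relation.ReflTransGen (AdjRel c) i j)
    (a : Fin d → ℝ) (ha : ∀ i, 0 < a i)
    (κ : Measure ℝ) (hLIM : LIM μ ν a κ)
    (π π' : Measure (Vec d × Vec d))
    (hπ : IsMaximizer μ ν c π) (hπ' : IsMaximizer μ ν c π') :
    π.map Prod.fst = π'.map Prod.fst := by
  obtain ⟨i0⟩ : Nonempty (Fin d) := by
    rcases hd with rfl | rfl <;> exact ⟨0⟩
  rw [first_marginal i0 μ ν hμprob hμ2 hν2 hcont c hc hconn a ha κ hLIM π hπ,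
    first_marginal i0 μ ν hμprob hμ2 hν2 hcont c hc hconn a ha κ hLIM π' hπ']

end MMOT
end

section
/- Let μ̌ⁿ = (μ^n_{t,i}) be a sequence of marginal systems and (ε_n)_{n≥1} ⊂ ℝ₊ be such that ℳ_{ε_n}(μ̌ⁿ) ≠ ∅ for all n and μ^n_{t,i} → μ_{t,i} in 𝒲₁ for every t ≤ T, i ≤ d, with ε_n → 0. Then any sequence (π_n)_{n≥1} with π_n ∈ ℳ_{ε_n}(μ̌ⁿ) is tight, and every weak limit point π of (π_n)_{n≥1} belongs to ℳ(μ̌); moreover along any weakly convergent subsequence the convergence π_{n_k} → π holds in Wasserstein-1 on 𝒫(𝒳). -/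
open MeasureTheory Filter

namespace MMOT

/-- Path space `𝒳 = (ℝ^d)^T`. -/
abbrev Path (T d : ℕ) := Fin T → Fin d → ℝ

/-- σ-algebra generated by the coordinates `X_0, …, X_t` (0-indexed). -/
noncomputable def pastSigma (T d : ℕ) (t : ℕ) : MeasurableSpace (Path T d) :=
  ⨆ s : Fin T, ⨆ _ : (s : ℕ) ≤ t, MeasurableSpace.comap (fun x => x s) inferInstance

def HasMarginals {T d : ℕ} (π : Measure (Path T d)) (μ : Fin T → Fin d → Measure ℝ) : Prop :=
  ∀ t i, π.map (fun x => x t i) = μ t i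

/-- `E_π[X_{t+1,i} | X_0,…,X_t]`. -/
noncomputable def condNext {T d : ℕ} (π : Measure (Path T d)) (t : ℕ) (ht : t + 1 < T)
    (i : Fin d) : Path T d → ℝ :=
  π[fun x => x ⟨t + 1, ht⟩ i | pastSigma T d t]

def IsMartingaleMeasure {T d : ℕ} (π : Measure (Path T d)) : Prop :=
  ∀ (t : ℕ) (ht : t + 1 < T) (i : Fin d),
    condNext π t ht i =ᵐ[π] fun x => x ⟨t, Nat.lt_of_succ_lt ht⟩ i

/-- The set `ℳ(μ̌)` of calibrated martingale measures. -/
def MartSet {T d : ℕ} (μ : Fin T → Fin d → Measure ℝ) : Set (Measure (Path T d)) :=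
  {π | IsProbabilityMeasure π ∧ HasMarginals π μ ∧ IsMartingaleMeasure π}

/-- The relaxed set `ℳ_ε(μ̌)`: calibrated measures whose martingale defect is at most `ε`. -/
def MartSetEps {T d : ℕ} (μ : Fin T → Fin d → Measure ℝ) (ε : ℝ) :
    Set (Measure (Path T d)) :=
  {π | IsProbabilityMeasure π ∧ HasMarginals π μ ∧
    ∀ (t : ℕ) (ht : t + 1 < T),
      ∫ x, ∑ i, |condNext π t ht i x - x ⟨t, Nat.lt_of_succ_lt ht⟩ i| ∂π ≤ ε}

def primalVals {T d : ℕ} (c : Path T d → ℝ) (S : Set (Measure (Path T d))) : Set ℝ :=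
  {r | ∃ π ∈ S, Integrable c π ∧ r = ∫ x, c x ∂π}

noncomputable def PbarEps {T d : ℕ} (μ : Fin T → Fin d → Measure ℝ) (c : Path T d → ℝ)
    (ε : ℝ) : ℝ :=
  sSup (primalVals c (MartSetEps μ ε))

noncomputable def PlowEps {T d : ℕ} (μ : Fin T → Fin d → Measure ℝ) (c : Path T d → ℝ)
    (ε : ℝ) : ℝ :=
  sInf (primalVals c (MartSetEps μ ε))

noncomputable def Pbar {T d : ℕ} (μ : Fin T → Fin d → Measure ℝ) (c : Path T d → ℝ) : ℝ :=
  sSup (primalVals c (MartSet μ))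

noncomputable def Plow {T d : ℕ} (μ : Fin T → Fin d → Measure ℝ) (c : Path T d → ℝ) : ℝ :=
  sInf (primalVals c (MartSet μ))

/-- Wasserstein-1 distance on probability measures on `ℝ`. -/
noncomputable def W1R (μ ν : Measure ℝ) : ℝ :=
  sInf {r | ∃ γ : Measure (ℝ × ℝ), IsProbabilityMeasure γ ∧ γ.map Prod.fst = μ ∧
    γ.map Prod.snd = ν ∧ Integrable (fun p => |p.1 - p.2|) γ ∧
    r = ∫ p, |p.1 - p.2| ∂γ}

/-- Lipschitz continuity with respect to the `ℓ¹`-norm on the path space. -/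
def LipschitzCost {T d : ℕ} (L : ℝ) (c : Path T d → ℝ) : Prop :=
  ∀ x y, |c x - c y| ≤ L * ∑ t, ∑ i, |x t i - y t i|

/-- Weak convergence of a sequence of measures (testing against bounded continuous functions). -/
def WeakTendsto {T d : ℕ} (πs : ℕ → Measure (Path T d)) (π : Measure (Path T d)) : Prop :=
  ∀ f : BoundedContinuousFunction (Path T d) ℝ,
    Tendsto (fun n => ∫ x, f x ∂(πs n)) atTop (nhds (∫ x, f x ∂π))

/-- Tightness of a sequence of measures. -/
def Tight {T d : ℕ} (πs : ℕ → Measure (Path T d)) : Prop :=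
  ∀ δ : ℝ, 0 < δ → ∃ K : Set (Path T d), IsCompact K ∧ ∀ n, πs n Kᶜ ≤ ENNReal.ofReal δ

/-- Wasserstein-1 distance on measures on the path space, for the `ℓ¹`-norm. -/
noncomputable def W1Path (T d : ℕ) (μ ν : Measure (Path T d)) : ℝ :=
  sInf {r | ∃ γ : Measure (Path T d × Path T d), IsProbabilityMeasure γ ∧
    γ.map Prod.fst = μ ∧ γ.map Prod.snd = ν ∧
    Integrable (fun p => ∑ t, ∑ i, |p.1 t i - p.2 t i|) γ ∧
    r = ∫ p, ∑ t, ∑ i, |p.1 t i - p.2 t i| ∂γ}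

lemma integrable_of_lip (μ : Measure ℝ) [IsProbabilityMeasure μ]
    (hμ : Integrable (fun y : ℝ => y) μ) (f : ℝ → ℝ) (L : ℝ)
    (hf : ∀ x y, |f x - f y| ≤ L * |x - y|) (hc : Continuous f) : Integrable f μ := by
  refine Integrable.mono' (g := fun y => |f 0| + L * |y|) ?_ hc.aestronglyMeasurable ?_
  · exact (integrable_const _).add (hμ.abs.const_mul L)
  · refine ae_of_all _ fun y => ?_
    have h1 := hf y 0
    have h2 := abs_add_le (f y - f 0) (f 0)
    simp only [sub_add_cancel, sub_zero] at h1 h2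
    rw [Real.norm_eq_abs]; linarith

lemma W1R_set_nonempty (μ ν : Measure ℝ) [IsProbabilityMeasure μ] [IsProbabilityMeasure ν]
    (hμ : Integrable (fun y : ℝ => y) μ) (hν : Integrable (fun y : ℝ => y) ν) :
    {r | ∃ γ : Measure (ℝ × ℝ), IsProbabilityMeasure γ ∧ γ.map Prod.fst = μ ∧
    γ.map Prod.snd = ν ∧ Integrable (fun p => |p.1 - p.2|) γ ∧
    r = ∫ p, |p.1 - p.2| ∂γ}.Nonempty := by
  refine ⟨_, μ.prod ν, inferInstance, by simp, by simp, ?_, rfl⟩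
  exact ((hμ.comp_fst ν).sub (hν.comp_snd μ)).abs

lemma W1R_lip (μ ν : Measure ℝ) [IsProbabilityMeasure μ] [IsProbabilityMeasure ν]
    (hμ : Integrable (fun y : ℝ => y) μ) (hν : Integrable (fun y : ℝ => y) ν)
    (f : ℝ → ℝ) (L : ℝ) (hL : 0 < L)
    (hf : ∀ x y, |f x - f y| ≤ L * |x - y|) (hc : Continuous f) :
    |∫ x, f x ∂μ - ∫ x, f x ∂ν| ≤ L * W1R μ ν := by
  rw [← div_le_iff₀' hL]
  refine le_csInf (W1R_set_nonempty μ ν hμ hν) ?_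
  rintro r ⟨γ, hγ, h1, h2, h3, rfl⟩
  rw [div_le_iff₀' hL]
  have i1 : Integrable (fun p : ℝ × ℝ => f p.1) γ := by
    have := integrable_of_lip μ hμ f L hf hc
    rw [← h1] at this
    exact this.comp_measurable measurable_fst
  have i2 : Integrable (fun p : ℝ × ℝ => f p.2) γ := by
    have := integrable_of_lip ν hν f L hf hc
    rw [← h2] at this
    exact this.comp_measurable measurable_snd
  have e1 : ∫ x, f x ∂μ = ∫ p, f p.1 ∂γ := by
    rw [← h1, integral_map measurable_fst.aemeasurable hc.aestronglyMeasurable]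
  have e2 : ∫ x, f x ∂ν = ∫ p, f p.2 ∂γ := by
    rw [← h2, integral_map measurable_snd.aemeasurable hc.aestronglyMeasurable]
  rw [e1, e2, ← integral_sub i1 i2, ← integral_const_mul]
  refine (abs_integral_le_integral_abs).trans ?_
  exact integral_mono (i1.sub i2).abs (h3.const_mul L) (fun p => hf p.1 p.2)

lemma W1R_tendsto (μ : Measure ℝ) [IsProbabilityMeasure μ]
    (hμ : Integrable (fun y : ℝ => y) μ) (μn : ℕ → Measure ℝ)
    [∀ n, IsProbabilityMeasure (μn n)] (hμn : ∀ n, Integrable (fun y : ℝ => y) (μn n))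
    (hW : Tendsto (fun n => W1R (μn n) μ) atTop (nhds 0))
    (f : ℝ → ℝ) (L : ℝ) (hL : 0 < L)
    (hf : ∀ x y, |f x - f y| ≤ L * |x - y|) (hc : Continuous f) :
    Tendsto (fun n => ∫ x, f x ∂(μn n)) atTop (nhds (∫ x, f x ∂μ)) := by
  rw [tendsto_iff_dist_tendsto_zero]
  refine squeeze_zero (fun _ => dist_nonneg) (g := fun n => L * W1R (μn n) μ) ?_ ?_
  · intro n
    exact W1R_lip _ _ (hμn n) hμ f L hL hf hc
  · simpa using hW.const_mul L

/-- total ℓ¹ norm -/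
noncomputable def N1 {T d : ℕ} (x : Path T d) : ℝ := ∑ t, ∑ i, |x t i|

lemma N1_nonneg {T d : ℕ} (x : Path T d) : 0 ≤ N1 x :=
  Finset.sum_nonneg fun _ _ => Finset.sum_nonneg fun _ _ => abs_nonneg _

lemma N1_cont {T d : ℕ} : Continuous (N1 : Path T d → ℝ) := by
  unfold N1; fun_prop

lemma coord_le_N1 {T d : ℕ} (x : Path T d) (t i) : |x t i| ≤ N1 x := by
  refine le_trans ?_ (Finset.single_le_sum (f := fun t => ∑ i, |x t i|)
    (fun _ _ => Finset.sum_nonneg fun _ _ => abs_nonneg _) (Finset.mem_univ t))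
  exact Finset.single_le_sum (f := fun i => |x t i|)
    (fun _ _ => abs_nonneg _) (Finset.mem_univ i)

lemma norm_le_N1 {T d : ℕ} (x : Path T d) : ‖x‖ ≤ N1 x := by
  refine (pi_norm_le_iff_of_nonneg (N1_nonneg x)).2 fun t => ?_
  refine (pi_norm_le_iff_of_nonneg (N1_nonneg x)).2 fun i => ?_
  exact coord_le_N1 x t i

lemma N1_le_norm {T d : ℕ} (x : Path T d) : N1 x ≤ T * d * ‖x‖ := by
  have : ∀ t i, |x t i| ≤ ‖x‖ := fun t i => (norm_le_pi_norm (x t) i).trans (norm_le_pi_norm x t)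
  calc N1 x ≤ ∑ _t : Fin T, ∑ _i : Fin d, ‖x‖ :=
        Finset.sum_le_sum fun t _ => Finset.sum_le_sum fun i _ => this t i
    _ = T * d * ‖x‖ := by simp [mul_assoc]

section marg
variable {T d : ℕ} {π : Measure (Path T d)} {μ : Fin T → Fin d → Measure ℝ}

lemma integrable_coord (h : HasMarginals π μ) (hmom : ∀ t i, Integrable (fun y : ℝ => y) (μ t i))
    (t i) : Integrable (fun x : Path T d => x t i) π := by
  have := hmom t i
  rw [← h t i] at this
  exact this.comp_measurable (by fun_prop)

lemma integrable_N1 (h : HasMarginals π μ) (hmom : ∀ t i, Integrable (fun y : ℝ => y) (μ t i)) :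
    Integrable N1 π := by
  unfold N1
  exact integrable_finsetSum _ fun t _ => integrable_finsetSum _ fun i _ =>
    (integrable_coord h hmom t i).abs

lemma integral_N1 (h : HasMarginals π μ) (hmom : ∀ t i, Integrable (fun y : ℝ => y) (μ t i)) :
    ∫ x, N1 x ∂π = ∑ t, ∑ i, ∫ y, |y| ∂(μ t i) := by
  unfold N1
  rw [integral_finsetSum _ fun t _ => integrable_finsetSum _ fun i _ =>
    (integrable_coord h hmom t i).abs]
  refine Finset.sum_congr rfl fun t _ => ?_
  rw [integral_finsetSum _ fun i _ => (integrable_coord h hmom t i).abs]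
  refine Finset.sum_congr rfl fun i _ => ?_
  rw [← h t i, integral_map (Measurable.aemeasurable (by fun_prop)) (by fun_prop)]
end marg

lemma tendsto_lin {E : Type*} [TopologicalSpace E] [MeasurableSpace E] [OpensMeasurableSpace E]
    [HasOuterApproxClosed E]
    (P : ℕ → ProbabilityMeasure E) (Q : ProbabilityMeasure E) (hw : Tendsto P atTop (nhds Q))
    (W : E → ℝ) (hWc : Continuous W)
    (hWP : ∀ n, Integrable W (P n : Measure E)) (hWQ : Integrable W (Q : Measure E))
    (hWt : Tendsto (fun n => ∫ x, W x ∂(P n : Measure E)) atTop (nhds (∫ x, W x ∂(Q : Measure E))))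
    (h : E → ℝ) (hc : Continuous h) (hb : ∀ x, |h x| ≤ W x) :
    Tendsto (fun n => ∫ x, h x ∂(P n : Measure E)) atTop (nhds (∫ x, h x ∂(Q : Measure E))) := by
  -- lower semicontinuity
  have key : ∀ g : E → ℝ, Continuous g → (∀ x, |g x| ≤ W x) → ∀ a, a < ∫ x, g x ∂(Q : Measure E) →
      ∀ᶠ n in atTop, a < ∫ x, g x ∂(P n : Measure E) := by
    intro g hg hgb a ha
    have ig : ∀ μ : Measure E, Integrable W μ → Integrable g μ := fun μ hμ =>
      hμ.mono' hg.measurable.aestronglyMeasurable (ae_of_all _ hgb)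
    have nn : 0 ≤ fun x => W x + g x := fun x => by
      have := neg_abs_le (g x); have := hgb x; show 0 ≤ W x + g x; linarith
    have lsc := lintegral_le_liminf_lintegral_of_forall_isOpen_measure_le_liminf_measure
      (μ := (Q : Measure E)) (μs := fun n => (P n : Measure E)) (f := fun x => W x + g x)
      (hWc.add hg) nn (fun G hG => ProbabilityMeasure.le_liminf_measure_open_of_tendsto hw hG)
    have e : ∀ μ : Measure E, Integrable W μ → ∫⁻ x, ENNReal.ofReal (W x + g x) ∂μ
        = ENNReal.ofReal (∫ x, W x ∂μ + ∫ x, g x ∂μ) := fun μ hμ => by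
      rw [← integral_add hμ (ig μ hμ)]
      exact (ofReal_integral_eq_lintegral_ofReal (hμ.add (ig μ hμ)) (ae_of_all _ nn)).symm
    set η := (∫ x, g x ∂(Q : Measure E) - a) / 2 with hη
    have hηp : 0 < η := by rw [hη]; linarith
    have hev1 : ∀ᶠ n in atTop, ∫ x, W x ∂(P n : Measure E) < ∫ x, W x ∂(Q : Measure E) + η :=
      hWt.eventually_lt_const (by linarith)
    by_cases hneg : ∫ x, W x ∂(Q : Measure E) + ∫ x, g x ∂(Q : Measure E) - η < 0
    · filter_upwards [hev1] with n hn
      have : 0 ≤ ∫ x, (W x + g x) ∂(P n : Measure E) := integral_nonneg nn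
      rw [integral_add (hWP n) (ig _ (hWP n))] at this
      linarith
    · push Not at hneg
      have hlt : ENNReal.ofReal (∫ x, W x ∂(Q : Measure E) + ∫ x, g x ∂(Q : Measure E) - η)
          < atTop.liminf (fun n => ∫⁻ x, ENNReal.ofReal (W x + g x) ∂(P n : Measure E)) := by
        refine lt_of_lt_of_le ?_ lsc
        rw [e _ hWQ]
        exact (ENNReal.ofReal_lt_ofReal_iff (by linarith)).2 (by linarith)
      filter_upwards [hev1, Filter.eventually_lt_of_lt_liminf hlt] with n hn hn2
      rw [e _ (hWP n)] at hn2
      have := (ENNReal.ofReal_lt_ofReal_iff_of_nonneg hneg).1 hn2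
      linarith
  rw [tendsto_order]
  refine ⟨fun a ha => key h hc hb a ha, fun a ha => ?_⟩
  have := key (fun x => - h x) hc.neg (fun x => by rw [abs_neg]; exact hb x) (-a)
    (by rw [integral_neg]; linarith)
  filter_upwards [this] with n hn
  rw [integral_neg] at hn; linarith

open scoped ENNReal

lemma exists_coup {E : Type*} [MeasurableSpace E] (A B : Measure E) [IsFiniteMeasure A]
    [IsFiniteMeasure B] (hAB : A Set.univ = B Set.univ) :
    ∃ γ : Measure (E × E), γ.map Prod.fst = A ∧ γ.map Prod.snd = B := by
  by_cases h0 : A Set.univ = 0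
  · refine ⟨0, ?_, ?_⟩
    · rw [Measure.measure_univ_eq_zero.1 h0]; simp
    · rw [hAB] at h0; rw [Measure.measure_univ_eq_zero.1 h0]; simp
  · refine ⟨(A Set.univ)⁻¹ • A.prod B, ?_, ?_⟩
    · rw [Measure.map_smul, Measure.map_fst_prod, ← hAB, smul_smul,
        ENNReal.inv_mul_cancel h0 (measure_ne_top _ _), one_smul]
    · rw [Measure.map_smul, Measure.map_snd_prod, smul_smul,
        ENNReal.inv_mul_cancel h0 (measure_ne_top _ _), one_smul]

lemma lint_le {E : Type*} [MeasurableSpace E] (γ : Measure (E × E)) (c : E × E → ℝ≥0∞)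
    (N : E → ℝ≥0∞) (hN : Measurable N) (hc : ∀ x y, c (x, y) ≤ N x + N y) :
    ∫⁻ p, c p ∂γ ≤ ∫⁻ x, N x ∂(γ.map Prod.fst) + ∫⁻ x, N x ∂(γ.map Prod.snd) := by
  rw [lintegral_map hN measurable_fst, lintegral_map hN measurable_snd,
    ← lintegral_add_left (by fun_prop)]
  exact lintegral_mono fun p => hc p.1 p.2

lemma inv_max_mul_le (a b : ℝ≥0∞) (hb : b ≠ ∞) : (max a b)⁻¹ * b ≤ 1 := by
  rcases eq_or_ne b 0 with rfl | h0
  · simp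
  calc (max a b)⁻¹ * b ≤ b⁻¹ * b := by gcongr; exact le_max_right _ _
    _ = 1 := ENNReal.inv_mul_cancel h0 hb

lemma inv_max_mul_le' (a b : ℝ≥0∞) (ha : a ≠ ∞) : (max a b)⁻¹ * a ≤ 1 := by
  rw [max_comm]; exact inv_max_mul_le b a ha

lemma rem_le (a b : ℝ≥0∞) (ha : a ≠ ∞) (hb : b ≠ ∞) : (1 - (max a b)⁻¹ * b) * a ≤ a - b := by
  rcases le_total a b with h | h
  · rcases eq_or_ne b 0 with rfl | h0
    · have : a = 0 := by simpa using h
      simp [this]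
    · rw [max_eq_right h, ENNReal.inv_mul_cancel h0 hb]; simp
  · rcases eq_or_ne a 0 with rfl | h0
    · simp
    rw [max_eq_left h, ENNReal.sub_mul (fun _ _ => ha), one_mul, mul_right_comm,
      ENNReal.inv_mul_cancel h0 ha, one_mul]

lemma exists_coupling {E : Type*} [MeasurableSpace E] {ι : Type*} [Fintype ι]
    (P Q : ι → Measure E) [∀ j, IsFiniteMeasure (P j)] [∀ j, IsFiniteMeasure (Q j)]
    (hP : IsProbabilityMeasure (∑ j, P j)) (hQ : IsProbabilityMeasure (∑ j, Q j))
    (c : E × E → ℝ≥0∞) (N : E → ℝ≥0∞) (hN : Measurable N)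
    (hc : ∀ x y, c (x, y) ≤ N x + N y) :
    ∃ γ : Measure (E × E), IsProbabilityMeasure γ ∧ γ.map Prod.fst = ∑ j, P j ∧
      γ.map Prod.snd = ∑ j, Q j ∧
      ∫⁻ p, c p ∂γ ≤ ∑ j, ((max (P j Set.univ) (Q j Set.univ))⁻¹ * ∫⁻ p, c p ∂((P j).prod (Q j))
        + ((1 - (max (P j Set.univ) (Q j Set.univ))⁻¹ * Q j Set.univ) * ∫⁻ x, N x ∂(P j)
        + (1 - (max (P j Set.univ) (Q j Set.univ))⁻¹ * P j Set.univ) * ∫⁻ x, N x ∂(Q j))) := by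
  set m : ι → ℝ≥0∞ := fun j => (max (P j Set.univ) (Q j Set.univ))⁻¹ with hm
  set G : Measure (E × E) := ∑ j, m j • (P j).prod (Q j) with hG
  set P' : Measure E := ∑ j, (1 - m j * Q j Set.univ) • P j with hP'
  set Q' : Measure E := ∑ j, (1 - m j * P j Set.univ) • Q j with hQ'
  have mapsum : ∀ (f : E × E → E), Measurable f → ∀ μ : ι → Measure (E × E),
      (∑ j, μ j).map f = ∑ j, (μ j).map f := by
    intro f hf μ
    ext s hs
    rw [Measure.map_apply hf hs]
    simp only [Measure.coe_finsetSum, Finset.sum_apply]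
    exact Finset.sum_congr rfl fun j _ => (Measure.map_apply hf hs).symm
  have h1 : G.map Prod.fst + P' = ∑ j, P j := by
    rw [hG, mapsum _ measurable_fst, hP', ← Finset.sum_add_distrib]
    refine Finset.sum_congr rfl fun j _ => ?_
    rw [Measure.map_smul, Measure.map_fst_prod, smul_smul, ← add_smul,
      add_tsub_cancel_of_le (inv_max_mul_le _ _ (measure_ne_top _ _)), one_smul]
  have h2 : G.map Prod.snd + Q' = ∑ j, Q j := by
    rw [hG, mapsum _ measurable_snd, hQ', ← Finset.sum_add_distrib]
    refine Finset.sum_congr rfl fun j _ => ?_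
    rw [Measure.map_smul, Measure.map_snd_prod, smul_smul, ← add_smul,
      add_tsub_cancel_of_le (inv_max_mul_le' _ _ (measure_ne_top _ _)), one_smul]
  have m1 : G Set.univ + P' Set.univ = 1 := by
    have := congrArg (fun μ : Measure E => μ Set.univ) h1
    simp only [Measure.add_apply, Measure.map_apply measurable_fst MeasurableSet.univ,
      Set.preimage_univ, hP.measure_univ] at this
    exact this
  have m2 : G Set.univ + Q' Set.univ = 1 := by
    have := congrArg (fun μ : Measure E => μ Set.univ) h2
    simp only [Measure.add_apply, Measure.map_apply measurable_snd MeasurableSet.univ,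
      Set.preimage_univ, hQ.measure_univ] at this
    exact this
  have Gfin : G Set.univ ≠ ∞ := fun h => by simp [h] at m1
  have P'f : IsFiniteMeasure P' := ⟨lt_top_iff_ne_top.2 fun h => by simp [h] at m1⟩
  have Q'f : IsFiniteMeasure Q' := ⟨lt_top_iff_ne_top.2 fun h => by simp [h] at m2⟩
  obtain ⟨γ', g1, g2⟩ := exists_coup P' Q' ((ENNReal.add_right_inj Gfin).1 (m1.trans m2.symm))
  have f1 : (G + γ').map Prod.fst = ∑ j, P j := by
    rw [Measure.map_add _ _ measurable_fst, g1, h1]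
  refine ⟨G + γ', ⟨?_⟩, f1, ?_, ?_⟩
  · rw [← hP.measure_univ, ← f1, Measure.map_apply measurable_fst MeasurableSet.univ,
      Set.preimage_univ]
  · rw [Measure.map_add _ _ measurable_snd, g2, h2]
  · rw [lintegral_add_measure, Finset.sum_add_distrib, Finset.sum_add_distrib]
    refine add_le_add ?_ ((lint_le γ' c N hN hc).trans (le_of_eq ?_))
    · rw [hG, lintegral_finsetSum_measure]
      exact le_of_eq (Finset.sum_congr rfl fun j _ => by rw [lintegral_smul_measure]; rfl)
    · rw [g1, g2, hP', hQ', lintegral_finsetSum_measure, lintegral_finsetSum_measure]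
      simp only [lintegral_smul_measure, smul_eq_mul]
      rfl

/-- Quantitative version with near cells and a far cell. -/
lemma exists_coupling_bound {E : Type*} [MeasurableSpace E] {ι : Type*} [Fintype ι]
    (P Q : Measure E) [IsProbabilityMeasure P] [IsProbabilityMeasure Q]
    (f : Option ι → E → ℝ≥0∞) (hf : ∀ j, Measurable (f j)) (hf1 : ∀ x, ∑ j, f j x = 1)
    (c : E × E → ℝ≥0∞) (N : E → ℝ≥0∞) (hN : Measurable N)
    (hc : ∀ x y, c (x, y) ≤ N x + N y) (δ R : ℝ≥0∞)
    (hδ : ∀ j x y, f (some j) x ≠ 0 → f (some j) y ≠ 0 → c (x, y) ≤ δ)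
    (hR : ∀ j x, f (some j) x ≠ 0 → N x ≤ R) :
    ∃ γ : Measure (E × E), IsProbabilityMeasure γ ∧ γ.map Prod.fst = P ∧
      γ.map Prod.snd = Q ∧
      ∫⁻ p, c p ∂γ ≤ 2 * (∫⁻ x, f none x * N x ∂P + ∫⁻ x, f none x * N x ∂Q) + (δ
        + ∑ j : ι, R * ((∫⁻ x, f (some j) x ∂P - ∫⁻ x, f (some j) x ∂Q)
          + (∫⁻ x, f (some j) x ∂Q - ∫⁻ x, f (some j) x ∂P))) := by
  have fle : ∀ j x, f j x ≤ 1 := fun j x => by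
    rw [← hf1 x]; exact Finset.single_le_sum (f := fun j => f j x) (fun _ _ => zero_le) (Finset.mem_univ j)
  have fin : ∀ (μ : Measure E) [IsProbabilityMeasure μ] j, IsFiniteMeasure (μ.withDensity (f j)) := by
    intro μ _ j
    refine isFiniteMeasure_withDensity (ne_of_lt ?_)
    calc ∫⁻ x, f j x ∂μ ≤ ∫⁻ x, 1 ∂μ := lintegral_mono (fle j)
      _ < ∞ := by simp
  have sum : ∀ (μ : Measure E), ∑ j, μ.withDensity (f j) = μ := by
    intro μ
    ext s hs
    simp only [Measure.coe_finsetSum, Finset.sum_apply, withDensity_apply _ hs]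
    rw [← lintegral_finsetSum _ fun j _ => hf j]
    simp [hf1]
  have finP := fin P
  have finQ := fin Q
  obtain ⟨γ, h0, h1, h2, h3⟩ := exists_coupling (fun j => P.withDensity (f j))
    (fun j => Q.withDensity (f j)) (by rw [sum P]; infer_instance) (by rw [sum Q]; infer_instance)
    c N hN hc
  rw [sum] at h1 h2
  refine ⟨γ, h0, h1, h2, h3.trans ?_⟩
  have mass : ∀ (μ : Measure E) j, μ.withDensity (f j) Set.univ = ∫⁻ x, f j x ∂μ := fun μ j => by
    rw [withDensity_apply _ MeasurableSet.univ, Measure.restrict_univ]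
  have intN : ∀ (μ : Measure E) j, ∫⁻ x, N x ∂(μ.withDensity (f j)) = ∫⁻ x, f j x * N x ∂μ :=
    fun μ j => by rw [lintegral_withDensity_eq_lintegral_mul _ (hf j) hN]; rfl
  have aene : ∀ (μ : Measure E) j, ∀ᵐ x ∂(μ.withDensity (f j)), f j x ≠ 0 := fun μ j => by
    rw [ae_withDensity_iff (hf j)]; exact ae_of_all _ fun x h => h
  have tP : ∀ j, ∫⁻ x, f j x ∂P ≠ ∞ := fun j => by rw [← mass]; exact measure_ne_top _ _
  have tQ : ∀ j, ∫⁻ x, f j x ∂Q ≠ ∞ := fun j => by rw [← mass]; exact measure_ne_top _ _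
  have NR : ∀ (μ : Measure E) (j : ι), ∫⁻ x, N x ∂(μ.withDensity (f (some j)))
      ≤ R * ∫⁻ x, f (some j) x ∂μ := fun μ j => by
    calc _ ≤ ∫⁻ x, R ∂(μ.withDensity (f (some j))) := by
          refine lintegral_mono_ae ?_
          filter_upwards [aene μ (some j)] with x hx using hR j x hx
      _ = _ := by rw [lintegral_const, mass]
  rw [Fintype.sum_option]
  refine add_le_add ?_ ?_
  · have hp : ∫⁻ p, c p ∂((P.withDensity (f none)).prod (Q.withDensity (f none))) ≤
        Q.withDensity (f none) Set.univ * ∫⁻ x, f none x * N x ∂P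
        + P.withDensity (f none) Set.univ * ∫⁻ x, f none x * N x ∂Q := by
      refine (lint_le _ c N hN hc).trans (le_of_eq ?_)
      rw [Measure.map_fst_prod, Measure.map_snd_prod, lintegral_smul_measure,
        lintegral_smul_measure, intN, intN]; rfl
    rw [two_mul]
    refine add_le_add ?_ ?_
    · refine (mul_le_mul_right hp _).trans ?_
      rw [mul_add, ← mul_assoc, ← mul_assoc]
      refine add_le_add ?_ ?_
      · exact mul_le_of_le_one_left' (inv_max_mul_le _ _ (measure_ne_top _ _))
      · exact mul_le_of_le_one_left' (inv_max_mul_le' _ _ (measure_ne_top _ _))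
    · rw [intN, intN]
      exact add_le_add (mul_le_of_le_one_left' tsub_le_self) (mul_le_of_le_one_left' tsub_le_self)
  · rw [Finset.sum_add_distrib]
    refine add_le_add ?_ (Finset.sum_le_sum fun j _ => ?_)
    · calc _ ≤ ∑ j : ι, δ * ∫⁻ x, f (some j) x ∂P := by
            refine Finset.sum_le_sum fun j _ => ?_
            have : ∫⁻ p, c p ∂((P.withDensity (f (some j))).prod (Q.withDensity (f (some j))))
              ≤ δ * (P.withDensity (f (some j)) Set.univ * Q.withDensity (f (some j)) Set.univ) := by
              calc _ ≤ ∫⁻ p, δ ∂((P.withDensity (f (some j))).prod (Q.withDensity (f (some j)))) := by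
                    refine lintegral_mono_ae ?_
                    filter_upwards [Measure.quasiMeasurePreserving_fst.ae (aene P (some j)),
                      Measure.quasiMeasurePreserving_snd.ae (aene Q (some j))] with p hp hq
                    exact hδ j p.1 p.2 hp hq
                _ = _ := by
                    rw [lintegral_const, ← Set.univ_prod_univ, Measure.prod_prod]
            refine (mul_le_mul_right this _).trans ?_
            rw [← mass]
            set a := P.withDensity (f (some j)) Set.univ
            set b := Q.withDensity (f (some j)) Set.univ
            calc (max a b)⁻¹ * (δ * (a * b)) = ((max a b)⁻¹ * b) * (δ * a) := by ring
              _ ≤ δ * a := mul_le_of_le_one_left' (inv_max_mul_le _ _ (measure_ne_top _ _))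
        _ = δ * ∑ j : ι, ∫⁻ x, f (some j) x ∂P := by rw [Finset.mul_sum]
        _ ≤ δ * 1 := by
            gcongr
            rw [← lintegral_finsetSum _ fun j _ => hf _]
            calc _ ≤ ∫⁻ x, 1 ∂P := lintegral_mono fun x => by
                  rw [← hf1 x, Fintype.sum_option]; exact le_add_self
              _ = 1 := by simp
        _ = δ := mul_one _
    · rw [mul_add]
      refine add_le_add ?_ ?_
      · refine (mul_le_mul_right (NR P j) _).trans ?_
        rw [mass, mass, mul_left_comm]
        exact mul_le_mul_right (rem_le _ _ (tP _) (tQ _)) _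
      · refine (mul_le_mul_right (NR Q j) _).trans ?_
        rw [mass, mass, mul_left_comm, max_comm]
        exact mul_le_mul_right (rem_le _ _ (tQ _) (tP _)) _

lemma W1Path_nonneg {T d : ℕ} (P Q : Measure (Path T d)) : 0 ≤ W1Path T d P Q := by
  refine Real.sInf_nonneg ?_
  rintro r ⟨γ, -, -, -, -, rfl⟩
  exact integral_nonneg fun p => Finset.sum_nonneg fun _ _ => Finset.sum_nonneg fun _ _ =>
    abs_nonneg _

lemma W1Path_le {T d : ℕ} (P Q : Measure (Path T d)) (γ : Measure (Path T d × Path T d))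
    (hγ : IsProbabilityMeasure γ) (h1 : γ.map Prod.fst = P) (h2 : γ.map Prod.snd = Q) (η : ℝ)
    (hη : 0 ≤ η) (h : ∫⁻ p, ENNReal.ofReal (N1 (p.1 - p.2)) ∂γ ≤ ENNReal.ofReal η) :
    W1Path T d P Q ≤ η := by
  have hcont : Continuous fun p : Path T d × Path T d => N1 (p.1 - p.2) :=
    N1_cont.comp (continuous_fst.sub continuous_snd)
  have nn : 0 ≤ᵐ[γ] fun p : Path T d × Path T d => N1 (p.1 - p.2) :=
    ae_of_all _ fun p => N1_nonneg _
  have hint : Integrable (fun p : Path T d × Path T d => N1 (p.1 - p.2)) γ := by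
    refine ⟨hcont.aestronglyMeasurable, ?_⟩
    rw [hasFiniteIntegral_iff_ofReal nn]
    exact lt_of_le_of_lt h ENNReal.ofReal_lt_top
  have hle : ∫ p, N1 (p.1 - p.2) ∂γ ≤ η := by
    rw [integral_eq_lintegral_of_nonneg_ae nn hcont.aestronglyMeasurable]
    exact ENNReal.toReal_le_of_le_ofReal hη h
  refine le_trans (csInf_le ⟨0, ?_⟩ ⟨γ, hγ, h1, h2, hint, rfl⟩) hle
  rintro r ⟨γ, -, -, -, -, rfl⟩
  exact integral_nonneg fun p => Finset.sum_nonneg fun _ _ => Finset.sum_nonneg fun _ _ =>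
    abs_nonneg _

lemma tendsto_lin_lint {E : Type*} [TopologicalSpace E] [MeasurableSpace E]
    [OpensMeasurableSpace E] [HasOuterApproxClosed E]
    (P : ℕ → ProbabilityMeasure E) (Q : ProbabilityMeasure E) (hw : Tendsto P atTop (nhds Q))
    (W : E → ℝ) (hWc : Continuous W)
    (hWP : ∀ n, Integrable W (P n : Measure E)) (hWQ : Integrable W (Q : Measure E))
    (hWt : Tendsto (fun n => ∫ x, W x ∂(P n : Measure E)) atTop (nhds (∫ x, W x ∂(Q : Measure E))))
    (h : E → ℝ) (hc : Continuous h) (h0 : ∀ x, 0 ≤ h x) (hb : ∀ x, h x ≤ W x) :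
    Tendsto (fun n => ∫⁻ x, ENNReal.ofReal (h x) ∂(P n : Measure E)) atTop
      (nhds (∫⁻ x, ENNReal.ofReal (h x) ∂(Q : Measure E))) := by
  have hb' : ∀ x, |h x| ≤ W x := fun x => by rw [abs_of_nonneg (h0 x)]; exact hb x
  have e : ∀ μ : Measure E, Integrable W μ → ∫⁻ x, ENNReal.ofReal (h x) ∂μ
      = ENNReal.ofReal (∫ x, h x ∂μ) := fun μ hμ =>
    (ofReal_integral_eq_lintegral_ofReal
      (hμ.mono' hc.measurable.aestronglyMeasurable (ae_of_all _ hb')) (ae_of_all _ h0)).symm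
  rw [e _ hWQ]
  simp_rw [fun n => e _ (hWP n)]
  exact ENNReal.tendsto_ofReal (tendsto_lin P Q hw W hWc hWP hWQ hWt h hc hb')

lemma exists_tail {T d : ℕ} (Q : Measure (Path T d)) [IsProbabilityMeasure Q]
    (hQ : Integrable N1 Q) (δ : ℝ) (hδ : 0 < δ) :
    ∃ R : ℝ, ∫⁻ x in {x | R < ‖x‖}, ENNReal.ofReal (N1 x) ∂Q < ENNReal.ofReal δ := by
  have fin : IsFiniteMeasure (Q.withDensity fun x => ENNReal.ofReal (N1 x)) :=
    isFiniteMeasure_withDensity_ofReal hQ.2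
  have hms : ∀ n : ℕ, MeasurableSet {x : Path T d | (n : ℝ) < ‖x‖} := fun n =>
    measurableSet_lt measurable_const measurable_norm
  have := tendsto_measure_iInter_atTop (μ := Q.withDensity fun x => ENNReal.ofReal (N1 x))
    (s := fun n : ℕ => {x : Path T d | (n : ℝ) < ‖x‖}) (fun n => (hms n).nullMeasurableSet)
    (fun m n hmn x hx => lt_of_le_of_lt (b := (n : ℝ)) (Nat.cast_le.2 hmn) (by exact hx)) ⟨0, measure_ne_top _ _⟩
  have hemp : (⋂ n : ℕ, {x : Path T d | (n : ℝ) < ‖x‖}) = ∅ := by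
    rw [Set.eq_empty_iff_forall_notMem]
    intro x hx
    obtain ⟨n, hn⟩ := exists_nat_ge ‖x‖
    exact absurd (Set.mem_iInter.1 hx n) (not_lt.2 hn)
  rw [hemp, measure_empty] at this
  obtain ⟨n, hn⟩ := (this.eventually_lt_const (ENNReal.ofReal_pos.2 hδ)).exists
  refine ⟨n, ?_⟩
  rwa [Function.comp_apply, withDensity_apply _ (hms n)] at hn

lemma W1Path_conv {T d : ℕ} (P : ℕ → ProbabilityMeasure (Path T d))
    (Q : ProbabilityMeasure (Path T d)) (hw : Tendsto P atTop (nhds Q))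
    (hWP : ∀ n, Integrable N1 (P n : Measure (Path T d)))
    (hWQ : Integrable N1 (Q : Measure (Path T d)))
    (hWt : Tendsto (fun n => ∫ x, N1 x ∂(P n : Measure (Path T d))) atTop
      (nhds (∫ x, N1 x ∂(Q : Measure (Path T d))))) (δ : ℝ) (hδ : 0 < δ) :
    ∀ᶠ n in atTop, W1Path T d (P n) Q ≤ 6 * δ := by
  obtain ⟨R, hR⟩ := exists_tail (Q : Measure (Path T d)) hWQ δ hδ
  obtain ⟨e, he, heδ⟩ : ∃ e : ℝ, 0 < e ∧ (T * d : ℝ) * (2 * e) ≤ δ := by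
    refine ⟨δ / (2 * (T * d + 1)), by positivity, ?_⟩
    rw [show (T * d : ℝ) * (2 * (δ / (2 * (T * d + 1)))) = δ * ((T * d) / (T * d + 1)) by
      field_simp]
    refine mul_le_of_le_one_right hδ.le ?_
    rw [div_le_one (by positivity)]; linarith
  obtain ⟨s, hs, hsfin, hcov⟩ := (isCompact_closedBall (0 : Path T d) R).finite_cover_balls he
  have : Fintype s := hsfin.fintype
  let g : Option s → Path T d → ℝ := fun j x =>
    match j with
    | none => max (‖x‖ - R) 0
    | some j => max (e - dist x j) 0
  have gc : ∀ j, Continuous (g j) := by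
    rintro (_ | j)
    · show Continuous fun x : Path T d => max (‖x‖ - R) 0
      fun_prop
    · show Continuous fun x : Path T d => max (e - dist x j) 0
      fun_prop
  have g0 : ∀ j x, 0 ≤ g j x := by
    rintro (_ | j) x <;> exact le_max_right _ _
  let G : Path T d → ℝ := fun x => ∑ j, g j x
  have Gc : Continuous G := continuous_finsetSum _ fun j _ => gc j
  have Gpos : ∀ x, 0 < G x := by
    intro x
    have : ∃ j, 0 < g j x := by
      by_cases hx : R < ‖x‖
      · exact ⟨none, lt_max_of_lt_left (by linarith)⟩
      · have : x ∈ Metric.closedBall (0 : Path T d) R := by simpa using not_lt.1 hx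
        obtain ⟨y, hy, hxy⟩ := Set.mem_iUnion₂.1 (hcov this)
        exact ⟨some ⟨y, hy⟩, lt_max_of_lt_left (by have := Metric.mem_ball.1 hxy; simp; linarith)⟩
    obtain ⟨j, hj⟩ := this
    exact Finset.sum_pos' (fun j _ => g0 j x) ⟨j, Finset.mem_univ _, hj⟩
  let fr : Option s → Path T d → ℝ := fun j x => g j x / G x
  have frc : ∀ j, Continuous (fr j) := fun j => (gc j).div Gc fun x => (Gpos x).ne'
  have fr0 : ∀ j x, 0 ≤ fr j x := fun j x => div_nonneg (g0 j x) (Gpos x).le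
  have frs : ∀ x, ∑ j, fr j x = 1 := fun x => by
    show ∑ j, g j x / G x = 1
    rw [← Finset.sum_div]; exact div_self (Gpos x).ne'
  have fr1 : ∀ j x, fr j x ≤ 1 := fun j x => by
    rw [← frs x]
    exact Finset.single_le_sum (f := fun j => fr j x) (fun j _ => fr0 j x) (Finset.mem_univ j)
  have near : ∀ (j : s) x, ENNReal.ofReal (fr (some j) x) ≠ 0 → dist x j < e := by
    intro j x h
    by_contra hn
    apply h
    have : g (some j) x = 0 := max_eq_right (by push Not at hn; linarith)
    show ENNReal.ofReal (g (some j) x / G x) = 0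
    rw [this]; simp
  have hbound := fun n => exists_coupling_bound (P n : Measure (Path T d)) (Q : Measure (Path T d))
    (fun j x => ENNReal.ofReal (fr j x)) (fun j => (frc j).measurable.ennreal_ofReal)
    (fun x => by
      rw [← ENNReal.ofReal_sum_of_nonneg (fun j _ => fr0 j x), frs x, ENNReal.ofReal_one])
    (fun p => ENNReal.ofReal (N1 (p.1 - p.2))) (fun x => ENNReal.ofReal (N1 x))
    (N1_cont.measurable.ennreal_ofReal)
    (fun x y => by
      rw [← ENNReal.ofReal_add (N1_nonneg x) (N1_nonneg y)]
      refine ENNReal.ofReal_le_ofReal ?_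
      unfold N1
      simp_rw [← Finset.sum_add_distrib]
      exact Finset.sum_le_sum fun t _ => Finset.sum_le_sum fun i _ => abs_sub _ _)
    (ENNReal.ofReal δ) (ENNReal.ofReal (T * d * (R + e)))
    (fun j x y hx hy => by
      refine ENNReal.ofReal_le_ofReal ((N1_le_norm _).trans (le_trans ?_ heδ))
      have h1 := near j x hx
      have h2 := near j y hy
      have h3 := dist_triangle_right x y j
      rw [← dist_eq_norm]
      gcongr
      linarith)
    (fun j x hx => by
      refine ENNReal.ofReal_le_ofReal ((N1_le_norm _).trans ?_)
      have h1 := near j x hx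
      have h2 := hs j.2
      rw [Metric.mem_closedBall] at h2
      have h3 := dist_triangle x j 0
      rw [dist_zero_right x] at h3
      gcongr
      linarith)
  have tj : ∀ j, Tendsto (fun n => ∫⁻ x, ENNReal.ofReal (fr j x) ∂(P n : Measure (Path T d))) atTop
      (nhds (∫⁻ x, ENNReal.ofReal (fr j x) ∂(Q : Measure (Path T d)))) := fun j =>
    tendsto_lin_lint P Q hw (fun _ => 1) continuous_const (fun _ => integrable_const _)
      (integrable_const _) (by simp) (fr j) (frc j) (fr0 j) (fr1 j)
  have tF : Tendsto (fun n => ∫⁻ x, ENNReal.ofReal (fr none x) * ENNReal.ofReal (N1 x)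
      ∂(P n : Measure (Path T d))) atTop (nhds (∫⁻ x, ENNReal.ofReal (fr none x) *
      ENNReal.ofReal (N1 x) ∂(Q : Measure (Path T d)))) := by
    simp_rw [← ENNReal.ofReal_mul (fr0 none _)]
    exact tendsto_lin_lint P Q hw N1 N1_cont hWP hWQ hWt (fun x => fr none x * N1 x)
      ((frc none).mul N1_cont) (fun x => mul_nonneg (fr0 none x) (N1_nonneg x))
      (fun x => mul_le_of_le_one_left (N1_nonneg x) (fr1 none x))
  have Fle : ∫⁻ x, ENNReal.ofReal (fr none x) * ENNReal.ofReal (N1 x) ∂(Q : Measure (Path T d))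
      ≤ ENNReal.ofReal δ := by
    refine le_trans ?_ hR.le
    rw [← lintegral_indicator (measurableSet_lt measurable_const measurable_norm)]
    refine lintegral_mono fun x => ?_
    by_cases hx : R < ‖x‖
    · rw [Set.indicator_of_mem (by exact hx)]
      exact mul_le_of_le_one_left' (by rw [← ENNReal.ofReal_one]; exact ENNReal.ofReal_le_ofReal (fr1 none x))
    · have : g none x = 0 := max_eq_right (by push Not at hx; linarith)
      have h2 : fr none x = 0 := by
        show g none x / G x = 0
        rw [this, zero_div]
      simp [h2]
  set F := ∫⁻ x, ENNReal.ofReal (fr none x) * ENNReal.ofReal (N1 x) ∂(Q : Measure (Path T d))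
  have finj : ∀ j, ∫⁻ x, ENNReal.ofReal (fr j x) ∂(Q : Measure (Path T d)) ≠ ∞ := fun j => by
    refine ne_of_lt (lt_of_le_of_lt (lintegral_mono (g := fun _ => 1) fun x => ?_) (by simp))
    rw [← ENNReal.ofReal_one]; exact ENNReal.ofReal_le_ofReal (fr1 j x)
  have tot : Tendsto (fun n => 2 * (∫⁻ x, ENNReal.ofReal (fr none x) * ENNReal.ofReal (N1 x)
      ∂(P n : Measure (Path T d)) + F) + (ENNReal.ofReal δ
        + ∑ j : s, ENNReal.ofReal (T * d * (R + e)) *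
          ((∫⁻ x, ENNReal.ofReal (fr (some j) x) ∂(P n : Measure (Path T d))
            - ∫⁻ x, ENNReal.ofReal (fr (some j) x) ∂(Q : Measure (Path T d)))
          + (∫⁻ x, ENNReal.ofReal (fr (some j) x) ∂(Q : Measure (Path T d)) -
            ∫⁻ x, ENNReal.ofReal (fr (some j) x) ∂(P n : Measure (Path T d)))))) atTop
      (nhds (2 * (F + F) + (ENNReal.ofReal δ + ∑ j : s, ENNReal.ofReal (T * d * (R + e)) *
        (0 + 0)))) := by
    refine Tendsto.add (ENNReal.Tendsto.const_mul (tF.add tendsto_const_nhds) (Or.inr (by simp)))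
      (tendsto_const_nhds.add (tendsto_finsetSum _ fun j _ =>
        ENNReal.Tendsto.const_mul (Tendsto.add ?_ ?_) (Or.inr (by simp))))
    · have := ENNReal.Tendsto.sub (tj (some j)) (tendsto_const_nhds (x :=
        ∫⁻ x, ENNReal.ofReal (fr (some j) x) ∂(Q : Measure (Path T d)))) (Or.inl (finj (some j)))
      rwa [tsub_self] at this
    · have := ENNReal.Tendsto.sub (tendsto_const_nhds (x :=
        ∫⁻ x, ENNReal.ofReal (fr (some j) x) ∂(Q : Measure (Path T d)))) (tj (some j))
        (Or.inl (finj (some j)))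
      rwa [tsub_self] at this
  have hlim : 2 * (F + F) + (ENNReal.ofReal δ + ∑ j : s, ENNReal.ofReal (T * d * (R + e)) *
        (0 + 0)) < ENNReal.ofReal (6 * δ) := by
    calc _ ≤ 2 * (ENNReal.ofReal δ + ENNReal.ofReal δ) + (ENNReal.ofReal δ + 0) := by
          gcongr; simp
      _ = ENNReal.ofReal (5 * δ) := by
          rw [ENNReal.ofReal_mul (by norm_num)]
          rw [show ENNReal.ofReal 5 = 5 by simp]; ring
      _ < _ := (ENNReal.ofReal_lt_ofReal_iff (by positivity)).2 (by linarith)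
  filter_upwards [tot.eventually_lt_const hlim] with n hn
  obtain ⟨γ, h0, h1, h2, h3⟩ := hbound n
  exact W1Path_le _ _ γ h0 h1 h2 _ (by positivity) (h3.trans hn.le)

abbrev PastIdx (T t : ℕ) := {s : Fin T // (s : ℕ) ≤ t}

/-- projection on the past -/
def pastMap (T d t : ℕ) : Path T d → (PastIdx T t → Fin d → ℝ) := fun x s => x s.1

lemma pastMap_cont (T d t : ℕ) : Continuous (pastMap T d t) := by
  unfold pastMap; fun_prop

lemma pastSigma_eq (T d t : ℕ) :
    pastSigma T d t = MeasurableSpace.comap (pastMap T d t) inferInstance := by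
  show _ = MeasurableSpace.comap (pastMap T d t) MeasurableSpace.pi
  unfold pastSigma MeasurableSpace.pi
  rw [MeasurableSpace.comap_iSup, iSup_subtype]
  simp only [MeasurableSpace.comap_comp]
  rfl

lemma pastSigma_le (T d t : ℕ) : pastSigma T d t ≤ MeasurableSpace.pi := by
  rw [pastSigma_eq]
  exact (pastMap_cont T d t).measurable.comap_le

lemma mart_of_tests {T d : ℕ} (π : Measure (Path T d)) [IsProbabilityMeasure π]
    (hint : ∀ t i, Integrable (fun x : Path T d => x t i) π) (t : ℕ) (ht : t + 1 < T) (i : Fin d)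
    (h : ∀ g : BoundedContinuousFunction (PastIdx T t → Fin d → ℝ) ℝ,
      ∫ x, g (pastMap T d t x) * (x ⟨t + 1, ht⟩ i - x ⟨t, Nat.lt_of_succ_lt ht⟩ i) ∂π = 0) :
    condNext π t ht i =ᵐ[π] fun x => x ⟨t, Nat.lt_of_succ_lt ht⟩ i := by
  set D : Path T d → ℝ := fun x => x ⟨t + 1, ht⟩ i - x ⟨t, Nat.lt_of_succ_lt ht⟩ i with hD
  have Dint : Integrable D π := (hint _ _).sub (hint _ _)
  have Dm : Measurable D := by rw [hD]; fun_prop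
  have pm := (pastMap_cont T d t).measurable
  have fin1 : IsFiniteMeasure (π.withDensity fun x => ENNReal.ofReal (D x)) :=
    isFiniteMeasure_withDensity_ofReal Dint.2
  have fin2 : IsFiniteMeasure (π.withDensity fun x => ENNReal.ofReal (-D x)) :=
    isFiniteMeasure_withDensity_ofReal Dint.neg.2
  have heq : (π.withDensity fun x => ENNReal.ofReal (D x)).map (pastMap T d t) =
      (π.withDensity fun x => ENNReal.ofReal (-D x)).map (pastMap T d t) := by
    refine ext_of_forall_integral_eq_of_IsFiniteMeasure fun g => ?_
    have gm : Measurable fun x => g (pastMap T d t x) := g.continuous.measurable.comp pm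
    rw [integral_map pm.aemeasurable g.continuous.aestronglyMeasurable,
      integral_map pm.aemeasurable g.continuous.aestronglyMeasurable,
      integral_withDensity_eq_integral_toReal_smul Dm.ennreal_ofReal (ae_of_all _ fun x => by simp),
      integral_withDensity_eq_integral_toReal_smul (f := fun x => ENNReal.ofReal (-D x))
        Dm.neg.ennreal_ofReal
        (ae_of_all _ fun x => by simp), ← sub_eq_zero]
    have ib : ∀ u : Path T d → ℝ, Integrable u π →
        Integrable (fun x => (ENNReal.ofReal (u x)).toReal • g (pastMap T d t x)) π := by
      intro u hu
      refine Integrable.mul_bdd (c := ‖g‖) (f := fun x => (ENNReal.ofReal (u x)).toReal) ?_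
        gm.aestronglyMeasurable (ae_of_all _ fun x => g.norm_coe_le_norm _)
      exact hu.real_toNNReal
    rw [← integral_sub (ib _ Dint) (ib (fun x => -D x) Dint.neg), ← h g]
    refine integral_congr_ae (ae_of_all _ fun x => ?_)
    simp only [smul_eq_mul, ENNReal.toReal_ofReal']
    rw [← sub_mul, mul_comm]
    congr 1
    exact max_zero_sub_max_neg_zero_eq_self (D x)
  have hle := pastSigma_le T d t
  refine (ae_eq_condExp_of_forall_setIntegral_eq hle (hint _ _) (fun s _ _ => (hint _ _).integrableOn)
    ?_ ?_).symm
  · intro s hs _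
    rw [eq_comm, ← sub_eq_zero, ← integral_sub (hint _ _).integrableOn (hint _ _).integrableOn]
    rw [pastSigma_eq] at hs
    obtain ⟨B, hB, rfl⟩ := hs
    show ∫ x in _, D x ∂π = 0
    rw [integral_eq_lintegral_pos_part_sub_lintegral_neg_part Dint.integrableOn]
    have := congrArg (fun μ => μ B) heq
    simp only [Measure.map_apply pm hB, withDensity_apply _ (pm hB)] at this
    rw [this, sub_self]
  · refine StronglyMeasurable.aestronglyMeasurable (Measurable.stronglyMeasurable ?_)
    rw [pastSigma_eq]
    have h1 : Measurable[MeasurableSpace.comap (pastMap T d t) inferInstance] (pastMap T d t) :=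
      comap_measurable _
    have h2 : Measurable fun y : PastIdx T t → Fin d → ℝ =>
      y ⟨⟨t, Nat.lt_of_succ_lt ht⟩, le_refl t⟩ i := by fun_prop
    exact h2.comp h1

lemma test_bound {T d : ℕ} (π : Measure (Path T d)) [IsProbabilityMeasure π]
    (hint : ∀ t i, Integrable (fun x : Path T d => x t i) π) (t : ℕ) (ht : t + 1 < T) (i : Fin d)
    (ε : ℝ) (hε : ∫ x, ∑ i, |condNext π t ht i x - x ⟨t, Nat.lt_of_succ_lt ht⟩ i| ∂π ≤ ε)
    (g : BoundedContinuousFunction (PastIdx T t → Fin d → ℝ) ℝ) :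
    |∫ x, g (pastMap T d t x) * (x ⟨t + 1, ht⟩ i - x ⟨t, Nat.lt_of_succ_lt ht⟩ i) ∂π|
      ≤ ‖g‖ * ε := by
  have hle := pastSigma_le T d t
  have pm := (pastMap_cont T d t).measurable
  have gm : Measurable fun x => g (pastMap T d t x) := g.continuous.measurable.comp pm
  have gm' : StronglyMeasurable[pastSigma T d t] fun x => g (pastMap T d t x) := by
    refine Measurable.stronglyMeasurable ?_
    rw [pastSigma_eq]
    exact g.continuous.measurable.comp (comap_measurable _)
  have gb : ∀ᵐ x ∂π, ‖g (pastMap T d t x)‖ ≤ ‖g‖ := ae_of_all _ fun x => g.norm_coe_le_norm _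
  have ib : ∀ u : Path T d → ℝ, Integrable u π →
      Integrable (fun x => g (pastMap T d t x) * u x) π := fun u hu =>
    hu.bdd_mul gm.aestronglyMeasurable gb
  have ic : ∀ i, Integrable (condNext π t ht i) π := fun i => integrable_condExp
  have e : ∫ x, g (pastMap T d t x) * x ⟨t + 1, ht⟩ i ∂π
      = ∫ x, g (pastMap T d t x) * condNext π t ht i x ∂π := by
    rw [← integral_condExp hle]
    exact integral_congr_ae (condExp_stronglyMeasurable_mul_of_bound hle gm' (hint _ _) _ gb)
  have e2 : ∫ x, g (pastMap T d t x) * (x ⟨t + 1, ht⟩ i - x ⟨t, Nat.lt_of_succ_lt ht⟩ i) ∂π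
      = ∫ x, g (pastMap T d t x) * (condNext π t ht i x - x ⟨t, Nat.lt_of_succ_lt ht⟩ i) ∂π := by
    simp_rw [mul_sub]
    rw [integral_sub (ib _ (hint _ _)) (ib _ (hint _ _)), integral_sub (ib _ (ic i)) (ib _ (hint _ _)),
      e]
  rw [e2]
  refine abs_integral_le_integral_abs.trans (le_trans ?_
    (mul_le_mul_of_nonneg_left hε (norm_nonneg g)))
  rw [← integral_const_mul]
  refine integral_mono (ib _ ((ic i).sub (hint _ _))).abs
    ((integrable_finsetSum _ fun j _ => ((ic j).sub (hint _ _)).abs).const_mul _) fun x => ?_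
  show |g (pastMap T d t x) * (condNext π t ht i x - x ⟨t, Nat.lt_of_succ_lt ht⟩ i)| ≤
    ‖g‖ * ∑ i, |condNext π t ht i x - x ⟨t, Nat.lt_of_succ_lt ht⟩ i|
  rw [abs_mul]
  refine mul_le_mul (g.norm_coe_le_norm _) ?_ (abs_nonneg _) (norm_nonneg _)
  exact Finset.single_le_sum (f := fun i => |condNext π t ht i x - x ⟨t, Nat.lt_of_succ_lt ht⟩ i|)
    (fun _ _ => abs_nonneg _) (Finset.mem_univ i)

/-- compactness of approximate martingale measures.
If `μⁿ_{t,i} → μ_{t,i}` in `𝒲₁` and `ε_n → 0`, then any sequence `π_n ∈ ℳ_{ε_n}(μ̌ⁿ)` is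
tight; every weak limit point lies in `ℳ(μ̌)`, and along any weakly convergent subsequence
the convergence also holds in Wasserstein-1 on the path space. -/
theorem approx_martingale_compactness {T d : ℕ}
    (μ : Fin T → Fin d → Measure ℝ)
    (hprob : ∀ t i, IsProbabilityMeasure (μ t i))
    (hmom : ∀ t i, Integrable (fun y : ℝ => y) (μ t i))
    (μn : ℕ → Fin T → Fin d → Measure ℝ)
    (hprobn : ∀ n t i, IsProbabilityMeasure (μn n t i))
    (hmomn : ∀ n t i, Integrable (fun y : ℝ => y) (μn n t i))
    (hW1 : ∀ t i, Tendsto (fun n => W1R (μn n t i) (μ t i)) atTop (nhds 0))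
    (ε : ℕ → ℝ) (hε0 : ∀ n, 0 ≤ ε n) (hε : Tendsto ε atTop (nhds 0))
    (πs : ℕ → Measure (Path T d))
    (hπs : ∀ n, πs n ∈ MartSetEps (μn n) (ε n)) :
    Tight πs ∧
    ∀ (π : Measure (Path T d)) (φ : ℕ → ℕ), StrictMono φ → WeakTendsto (πs ∘ φ) π →
      π ∈ MartSet μ ∧ Tendsto (fun k => W1Path T d (πs (φ k)) π) atTop (nhds 0) := by
  have hprobπ : ∀ n, IsProbabilityMeasure (πs n) := fun n => (hπs n).1
  have hN : ∀ n, Integrable N1 (πs n) := fun n => integrable_N1 (hπs n).2.1 (hmomn n)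
  have habs : ∀ t i, Tendsto (fun n => ∫ y, |y| ∂(μn n t i)) atTop (nhds (∫ y, |y| ∂(μ t i))) :=
    fun t i => W1R_tendsto (μ t i) (hmom t i) (fun n => μn n t i) (fun n => hmomn n t i) (hW1 t i)
      (fun y => |y|) 1 one_pos (fun x y => by rw [one_mul]; exact abs_abs_sub_abs_le_abs_sub x y)
      continuous_abs
  have hNt : Tendsto (fun n => ∫ x, N1 x ∂(πs n)) atTop (nhds (∑ t, ∑ i, ∫ y, |y| ∂(μ t i))) := by
    simp_rw [fun n => integral_N1 (hπs n).2.1 (hmomn n)]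
    exact tendsto_finsetSum _ fun t _ => tendsto_finsetSum _ fun i _ => habs t i
  refine ⟨?_, ?_⟩
  · intro δ hδ
    obtain ⟨C, hC⟩ := hNt.bddAbove_range
    have hC' : ∀ n, ∫ x, N1 x ∂(πs n) ≤ C := fun n => hC ⟨n, rfl⟩
    have hC0 : 0 ≤ C := (integral_nonneg N1_nonneg).trans (hC' 0)
    set R := (C + 1) / δ with hR
    have hRp : 0 < R := by positivity
    refine ⟨Metric.closedBall 0 R, isCompact_closedBall _ _, fun n => ?_⟩
    have h1 : (Metric.closedBall (0 : Path T d) R)ᶜ ⊆ {x | R ≤ N1 x} := by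
      intro x hx
      simp only [Set.mem_compl_iff, Metric.mem_closedBall, dist_zero_right, not_le] at hx
      exact hx.le.trans (norm_le_N1 x)
    have h2 := mul_meas_ge_le_integral_of_nonneg (ae_of_all (πs n) N1_nonneg) (hN n) R
    have h3 : (πs n).real {x | R ≤ N1 x} ≤ δ := by
      have : R * (πs n).real {x | R ≤ N1 x} ≤ R * δ := by
        refine (h2.trans (hC' n)).trans ?_
        rw [hR, div_mul_cancel₀ _ hδ.ne']; linarith
      exact le_of_mul_le_mul_left this hRp
    refine (measure_mono h1).trans ?_
    rw [← ofReal_measureReal]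
    exact ENNReal.ofReal_le_ofReal h3
  · intro π φ hφ hweak
    have hφt := hφ.tendsto_atTop
    have hπ : IsProbabilityMeasure π := by
      have := hweak (BoundedContinuousFunction.const _ 1)
      have h1 : ∀ n, ∫ x, (BoundedContinuousFunction.const (Path T d) (1 : ℝ)) x ∂((πs ∘ φ) n) = 1 := by
        intro n
        have := hprobπ (φ n)
        simp
      simp_rw [h1] at this
      have h2 := tendsto_nhds_unique tendsto_const_nhds this
      simp only [BoundedContinuousFunction.const_apply, integral_const, smul_eq_mul, mul_one,
        Measure.real] at h2
      exact ⟨(ENNReal.toReal_eq_one_iff _).1 h2.symm⟩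
    let P : ℕ → ProbabilityMeasure (Path T d) := fun n => ⟨πs (φ n), hprobπ _⟩
    let Q : ProbabilityMeasure (Path T d) := ⟨π, hπ⟩
    have hw : Tendsto P atTop (nhds Q) :=
      ProbabilityMeasure.tendsto_iff_forall_integral_tendsto.2 hweak
    have hmarg : HasMarginals π μ := by
      intro t i
      have cc : Continuous fun x : Path T d => x t i := by fun_prop
      have t1 := ProbabilityMeasure.tendsto_map_of_tendsto_of_continuous P Q hw cc
      have t2 : Tendsto (fun n => (P n).map cc.measurable.aemeasurable) atTop
          (nhds (⟨μ t i, hprob t i⟩ : ProbabilityMeasure ℝ)) := by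
        refine tendsto_iff_forall_lipschitz_integral_tendsto.2 ?_
        rintro f - ⟨L, hL⟩
        have := (W1R_tendsto (μ t i) (hmom t i) (fun n => μn n t i) (fun n => hmomn n t i) (hW1 t i)
          f (L + 1) (by positivity) (fun x y => by
            have := hL.dist_le_mul x y
            rw [Real.dist_eq, Real.dist_eq] at this
            have := abs_nonneg (x - y)
            linarith) hL.continuous).comp hφt
        refine this.congr fun n => ?_
        show ∫ x, f x ∂(μn (φ n) t i) = ∫ x, f x ∂((πs (φ n)).map fun x => x t i)
        rw [(hπs (φ n)).2.1 t i]
      have := tendsto_nhds_unique t1 t2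
      exact congrArg (fun ν : ProbabilityMeasure ℝ => (ν : Measure ℝ)) this
    have hNQ : Integrable N1 π := integrable_N1 hmarg hmom
    have hNt' : Tendsto (fun n => ∫ x, N1 x ∂(P n : Measure (Path T d))) atTop
        (nhds (∫ x, N1 x ∂(Q : Measure (Path T d)))) := by
      have e : ∫ x, N1 x ∂(Q : Measure (Path T d)) = _ := integral_N1 hmarg hmom
      rw [e]
      exact hNt.comp hφt
    refine ⟨⟨hπ, hmarg, fun t ht i => ?_⟩, ?_⟩
    · refine mart_of_tests π (integrable_coord hmarg hmom) t ht i fun g => ?_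
      have lim := tendsto_lin P Q hw (fun x => (2 * ‖g‖) * N1 x) (continuous_const.mul N1_cont)
        (fun n => (hN (φ n)).const_mul _) (hNQ.const_mul _)
        (by simp_rw [integral_const_mul]; exact hNt'.const_mul _)
        (fun x => g (pastMap T d t x) * (x ⟨t + 1, ht⟩ i - x ⟨t, Nat.lt_of_succ_lt ht⟩ i))
        ((g.continuous.comp (pastMap_cont T d t)).mul (by fun_prop))
        (fun x => by
          rw [abs_mul, mul_comm 2, mul_assoc]
          refine mul_le_mul (g.norm_coe_le_norm _) ?_ (abs_nonneg _) (norm_nonneg _)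
          have h1 := coord_le_N1 x ⟨t + 1, ht⟩ i
          have h2 := coord_le_N1 x ⟨t, Nat.lt_of_succ_lt ht⟩ i
          have h3 := abs_sub (x ⟨t + 1, ht⟩ i) (x ⟨t, Nat.lt_of_succ_lt ht⟩ i)
          linarith)
      refine tendsto_nhds_unique lim ?_
      refine squeeze_zero_norm (a := fun n => ‖g‖ * ε (φ n)) (fun n => ?_) ?_
      · have := hprobπ (φ n)
        exact test_bound (πs (φ n)) (integrable_coord (hπs (φ n)).2.1 (hmomn (φ n))) t ht i _
          ((hπs (φ n)).2.2 t ht) g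
      · simpa using (hε.comp hφt).const_mul ‖g‖
    · rw [Metric.tendsto_atTop]
      intro η hη
      have := W1Path_conv P Q hw (fun n => hN (φ n)) hNQ hNt' (η / 12) (by positivity)
      obtain ⟨n0, hn0⟩ := eventually_atTop.1 this
      refine ⟨n0, fun n hn => ?_⟩
      rw [Real.dist_eq, sub_zero, abs_of_nonneg (W1Path_nonneg _ _)]
      have h1 : W1Path T d (πs (φ n)) π ≤ 6 * (η / 12) := hn0 n hn
      linarith

end MMOT
end
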